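/- Fix δ > 0 and ε > 0. Then there exist η > 0 and n₀ such that for all n ≥ n₀ and all M, k with M/N ∈ [δ, 1−δ] and k/n ∈ [δ, 1−δ], with probability at least 1 − exp(−n^η) over G = G_{n,M} the following holds: for all real z₀ ≤ z₁, |P_S(e(S) ∈ [z₀, z₁]) − P(Z ∈ [z₀, z₁])| ≤ n^{−1/4+ε}, where S is a uniformly random k-element subset of [n] and Z is a normal random variable with mean K·M/N and variance λ·n². -/

import Mathlib

/-!
The random graph `G_{n,M}` is compared with the binomial random graph `G(n,p)`, `p = M/N`. With
`c_e(S) = 1[e ⊆ S] - K/N`, the statistic `lin S G = ∑ₑ c_e(S) (1[e ∈ G] - p)` equals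
`e(S) - K·M/N` when `G` has exactly `M` edges (`lin_eq_edgesIn`). Fix a smooth step `h` of width
`L = n^(3/4)` and let `Fav h G` be the average over `k`-sets `S` of `h (K·M/N + lin S G)`.

* Concentration of `G ↦ Fav h G` over `G(n,p)`. Adding an edge `e` changes `Fav h` by about
  `E_S [h' c_e(S)]`. The Gram matrix of the variables `S ↦ c_e(S)` has absolute row sums `O(n)`
  (`cov_row`), so a Bessel inequality (`bessel_kSets`) bounds the squared discrete gradient by
  `O(n / L²) = O(n^(-1/2))` (`Fav_grad`). The Efron–Stein inequality, applied to exponentials and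
  iterated along `θ, θ/2, θ/4, …`, turns this into exponential tails at scale `n^(-1/4)`
  (`bE_concentration`).
* Mean of `Fav h` over `G(n,p)`. After exchanging the two averages, `S` is fixed and `lin S G` is a
  sum of independent centred variables bounded by `1`; Lindeberg replacement (`lindeberg`) compares
  it with a Gaussian, with error `O(n² / L³) = O(n^(-1/4))`. Replacing its exact variance by `λ n²`
  costs `O(n / L²)` (`var_compare`, `Smooth3.gauss_var_compare`).
* Transfer. Since `M` is the mode of `Bin(N, M/N)`, the event of having `M` edges has probability at
  least `1/(N+1)` in `G(n,p)`, so passing to `G_{n,M}` multiplies the probability of a bad event by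
  at most `N+1` (`transfer`).
* From smooth steps to intervals. A union bound covers the `O(n²)` thresholds relevant to the
  integer-valued `e(S)`. Indicators of half-lines are sandwiched between smooth steps, and the
  Gaussian density is `O(1/n)`, so smoothing costs `O(L/n) = O(n^(-1/4))` (`grid_of_smooth`,
  `interval_of_grid`).
-/

open Finset MeasureTheory ProbabilityTheory

noncomputable section

/-- Uniform probability of an event `P` over a finite sample space `Ω`. -/
def Pru {α : Type*} (Ω : Finset α) (P : α → Prop) : ℝ := by
  classical exact ((Ω.filter P).card : ℝ) / Ω.card

/-- Expectation of `f` under the uniform distribution on `Ω`. -/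
def Exu {α : Type*} (Ω : Finset α) (f : α → ℝ) : ℝ := (∑ a ∈ Ω, f a) / Ω.card

/-- Variance of `f` under the uniform distribution on `Ω`. -/
def Varu {α : Type*} (Ω : Finset α) (f : α → ℝ) : ℝ := Exu Ω (fun a => (f a - Exu Ω f) ^ 2)

/-- Conditional expectation of `f` given the value of `g`, under uniform distribution on `Ω`. -/
def condExpU {α β : Type*} (Ω : Finset α) (f : α → ℝ) (g : α → β) (ω : α) : ℝ := by
  classical exact Exu (Ω.filter (fun ω' => g ω' = g ω)) f

/-- The edge set of the complete graph on `[n]`. -/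
def completeEdges (n : ℕ) : Finset (Sym2 (Fin n)) := by
  classical exact Finset.univ.filter (fun e => ¬ e.IsDiag)

/-- A finset of `Sym2`s is a graph if it has no loops. -/
def IsGraph {n : ℕ} (G : Finset (Sym2 (Fin n))) : Prop := ∀ e ∈ G, ¬ e.IsDiag

/-- The sample space of `G_{n,M}`: all graphs on `[n]` with exactly `M` edges. -/
def graphsM (n M : ℕ) : Finset (Finset (Sym2 (Fin n))) := by
  classical exact (completeEdges n).powerset.filter (fun G => G.card = M)

/-- `e(S)`: number of edges of `G` with both endpoints in `S`. -/
def edgesIn {n : ℕ} (G : Finset (Sym2 (Fin n))) (S : Finset (Fin n)) : ℕ := by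
  classical exact (G.filter (fun e => ∀ v ∈ e, v ∈ S)).card

/-- `d_S(v)`: number of neighbours of `v` (in graph `G`) lying in `S`. -/
def dS {n : ℕ} (G : Finset (Sym2 (Fin n))) (S : Finset (Fin n)) (v : Fin n) : ℕ := by
  classical exact (S.filter (fun w => s(v, w) ∈ G)).card

/-- All `k`-element subsets of `[n]`. -/
def kSets (n k : ℕ) : Finset (Finset (Fin n)) := Finset.univ.powersetCard k

/-- Probability of an event under the uniform random graph `G_{n,M}`. -/
def PrGnM (n M : ℕ) (P : Finset (Sym2 (Fin n)) → Prop) : ℝ := Pru (graphsM n M) P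

/-- Probability of an event under the binomial random graph `G_{n,p}`. -/
def PrGnp (n : ℕ) (p : ℝ) (P : Finset (Sym2 (Fin n)) → Prop) : ℝ := by
  classical exact ∑ G ∈ (completeEdges n).powerset,
    if (P G) then p ^ G.card * (1 - p) ^ ((completeEdges n).card - G.card) else 0

/-- `N = n(n-1)/2` as a real number. -/
def Nr (n : ℕ) : ℝ := (n : ℝ) * ((n : ℝ) - 1) / 2

/-- `K = k(k-1)/2` as a real number. -/
def Kr (k : ℕ) : ℝ := (k : ℝ) * ((k : ℝ) - 1) / 2

/-- `λ = ((n²-k²)k²/(2n⁴))·(M(N-M)/N²)`. -/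
def lamP (n M k : ℕ) : ℝ :=
  (((n:ℝ)^2 - (k:ℝ)^2) * (k:ℝ)^2 / (2 * (n:ℝ)^4)) * ((M:ℝ) * (Nr n - (M:ℝ)) / (Nr n)^2)

/-- The mean `K·M/N`. -/
def muP (n M k : ℕ) : ℝ := Kr k * (M:ℝ) / Nr n

/-- `W = (e(S) - K·M/N)/n`. -/
def Wfun (n M k : ℕ) (G : Finset (Sym2 (Fin n))) (S : Finset (Fin n)) : ℝ :=
  ((edgesIn G S : ℝ) - muP n M k) / n

/-- `V = Σ_v d(v)² - n·d(G)²`, i.e. `n` times the degree variance. -/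
def Vdeg {n : ℕ} (G : Finset (Sym2 (Fin n))) : ℝ :=
  (∑ v : Fin n, (dS G Finset.univ v : ℝ) ^ 2) - (n:ℝ) * (2 * (G.card : ℝ) / n) ^ 2

/-- Gaussian CDF with mean `m` and variance `v`. -/
def gaussCdf (m v z : ℝ) : ℝ := ((gaussianReal m v.toNNReal) (Set.Iic z)).toReal

/-- Gaussian measure of a set, mean `m`, variance `v`. -/
def gaussMeas (m v : ℝ) (A : Set ℝ) : ℝ := ((gaussianReal m v.toNNReal) A).toReal

/-- Gaussian density with mean `m` and variance `v`. -/
def gaussPdf (m v x : ℝ) : ℝ := gaussianPDFReal m v.toNNReal x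

/-- `P(Y ∈ ·)` for `Y ~ Bin(ν, p)`. -/
def binomPr (ν : ℕ) (p : ℝ) (P : ℕ → Prop) : ℝ := by
  classical exact ∑ j ∈ Finset.range (ν + 1),
    if (P j) then (ν.choose j : ℝ) * p ^ j * (1 - p) ^ (ν - j) else 0

/-- Sample space for "uniform `k`-set `S`, then uniform `x ∈ S` and `x̄ ∈ S̄`". -/
def SwapΩ (n k : ℕ) : Finset (Σ _ : Finset (Fin n), Fin n × Fin n) :=
  (kSets n k).sigma (fun S => S ×ˢ Sᶜ)

/-- A triple `(a, r, t)` is valid for `β`. -/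
def ValidTriple (β : ℝ) (n a r t : ℕ) : Prop :=
  a ≤ r ∧
  (∃ c : ℝ, 1/2 ≤ c ∧ c ≤ 1 ∧ (a : ℝ) = c * (t:ℝ) ^ ((3:ℝ)/2) * (n:ℝ) ^ (2*β - 1/2)) ∧
  (r : ℝ) ≤ (n:ℝ) ^ (-β) * Real.sqrt ((n:ℝ) * (t:ℝ))

/-! ### Concentration for binomial random subsets -/

/-- The expectation of `f` over the binomial random subset of `E`, which contains each element
independently with probability `p`. For `E = completeEdges n` this is the expectation over
`G(n,p)`. -/
def bE {α : Type*} (p : ℝ) (E : Finset α) (f : Finset α → ℝ) : ℝ :=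
  ∑ G ∈ E.powerset, p ^ #G * (1 - p) ^ (#E - #G) * f G

section bern
variable {α : Type*} {p : ℝ} {E : Finset α}

lemma bE_congr {f g : Finset α → ℝ} (h : ∀ G, G ⊆ E → f G = g G) : bE p E f = bE p E g :=
  Finset.sum_congr rfl fun G hG => by rw [h G (Finset.mem_powerset.1 hG)]

lemma bE_mono (hp0 : 0 ≤ p) (hp1 : p ≤ 1) {f g : Finset α → ℝ} (h : ∀ G, G ⊆ E → f G ≤ g G) :
    bE p E f ≤ bE p E g :=
  Finset.sum_le_sum fun G hG => mul_le_mul_of_nonneg_left (h G (Finset.mem_powerset.1 hG))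
    (mul_nonneg (pow_nonneg hp0 _) (pow_nonneg (by linarith) _))

lemma bE_add (f g : Finset α → ℝ) : bE p E (fun G => f G + g G) = bE p E f + bE p E g := by
  simp [bE, mul_add, Finset.sum_add_distrib]

lemma bE_const_mul (c : ℝ) (f : Finset α → ℝ) : bE p E (fun G => c * f G) = c * bE p E f := by
  simp only [bE, Finset.mul_sum]
  exact Finset.sum_congr rfl fun G _ => by ring

lemma bE_sub (f g : Finset α → ℝ) : bE p E (fun G => f G - g G) = bE p E f - bE p E g := by
  simp [bE, mul_sub, Finset.sum_sub_distrib]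

lemma bE_sum {ι : Type*} (s : Finset ι) (f : ι → Finset α → ℝ) :
    bE p E (fun G => ∑ i ∈ s, f i G) = ∑ i ∈ s, bE p E (f i) := by
  simp only [bE, Finset.mul_sum]
  exact Finset.sum_comm

lemma bE_empty (f : Finset α → ℝ) : bE p (∅ : Finset α) f = f ∅ := by
  simp [bE]

lemma bE_insert [DecidableEq α] {e : α} (he : e ∉ E) (f : Finset α → ℝ) :
    bE p (insert e E) f = (1 - p) * bE p E f + p * bE p E (fun G => f (insert e G)) := by
  rw [bE, Finset.sum_powerset_insert he]
  congr 1
  · rw [bE, Finset.mul_sum]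
    refine Finset.sum_congr rfl fun G hG => ?_
    have hle := Finset.card_le_card (Finset.mem_powerset.1 hG)
    rw [Finset.card_insert_of_notMem he, Nat.succ_sub hle, pow_succ]
    ring
  · rw [bE, Finset.mul_sum]
    refine Finset.sum_congr rfl fun G hG => ?_
    have hG' : e ∉ G := fun h => he (Finset.mem_powerset.1 hG h)
    rw [Finset.card_insert_of_notMem he, Finset.card_insert_of_notMem hG', Nat.add_sub_add_right,
      pow_succ]
    ring

lemma bE_one : bE p E (fun _ => 1) = 1 := by
  classical
  induction E using Finset.induction_on with
  | empty => simp [bE_empty]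
  | insert e E he ih => rw [bE_insert he, ih]; ring

lemma bE_const (c : ℝ) : bE p E (fun _ => c) = c := by
  have := bE_const_mul (p := p) (E := E) c (fun _ => 1)
  rw [bE_one] at this
  simpa using this

lemma bE_sq_le (hp0 : 0 ≤ p) (hp1 : p ≤ 1) (f : Finset α → ℝ) :
    (bE p E f) ^ 2 ≤ bE p E (fun G => f G ^ 2) := by
  set m := bE p E f with hm
  have h0 : 0 ≤ bE p E (fun G => f G ^ 2 + ((-2 * m) * f G + m ^ 2)) := by
    calc (0:ℝ) = bE p E (fun _ => 0) := (bE_const 0).symm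
      _ ≤ _ := bE_mono hp0 hp1 fun G _ => by nlinarith [sq_nonneg (f G - m)]
  rw [bE_add, bE_add, bE_const_mul, bE_const, ← hm] at h0
  nlinarith

/-- The Efron–Stein inequality: the variance is at most a quarter of the expected sum of squared
discrete derivatives. One element contributes the factor `p (1 - p) ≤ 1/4`. -/
lemma efron_stein [DecidableEq α] (hp0 : 0 ≤ p) (hp1 : p ≤ 1) (f : Finset α → ℝ) :
    bE p E (fun G => f G ^ 2) - (bE p E f) ^ 2 ≤
      bE p E (fun G => ∑ e ∈ E, (1 / 4) * (f (insert e G) - f (G.erase e)) ^ 2) := by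
  induction E using Finset.induction_on generalizing f with
  | empty => simp [bE_empty]
  | insert e E he ih =>
    have h0 := ih f
    have h1 := ih (fun G => f (insert e G))
    have hsq := bE_sq_le (E := E) hp0 hp1 (fun G => f (insert e G) - f G)
    rw [bE_sub] at hsq
    rw [bE_insert he, bE_insert he, bE_insert he]
    set a0 := bE p E f
    set a1 := bE p E (fun G => f (insert e G))
    set D := bE p E (fun G => (f (insert e G) - f G) ^ 2)
    have e0 : bE p E (fun G => ∑ x ∈ insert e E, (1 / 4) * (f (insert x G) - f (G.erase x)) ^ 2)
        = (1 / 4) * D +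
          bE p E (fun G => ∑ x ∈ E, (1 / 4) * (f (insert x G) - f (G.erase x)) ^ 2) := by
      rw [← bE_const_mul, ← bE_add]
      refine bE_congr fun G hG => ?_
      rw [Finset.sum_insert he, Finset.erase_eq_of_notMem fun h => he (hG h)]
    have e1 : bE p E (fun G => ∑ x ∈ insert e E,
          (1 / 4) * (f (insert x (insert e G)) - f ((insert e G).erase x)) ^ 2)
        = (1 / 4) * D + bE p E (fun G => ∑ x ∈ E,
          (1 / 4) * (f (insert e (insert x G)) - f (insert e (G.erase x))) ^ 2) := by
      rw [← bE_const_mul, ← bE_add]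
      refine bE_congr fun G hG => ?_
      rw [Finset.sum_insert he, Finset.erase_insert fun h => he (hG h), Finset.insert_idem]
      congr 1
      refine Finset.sum_congr rfl fun x hx => ?_
      have hxe : e ≠ x := fun h => he (h ▸ hx)
      rw [Finset.insert_comm, Finset.erase_insert_of_ne hxe]
    rw [e0, e1]
    have hq : 0 ≤ 1 - p := by linarith
    have m0 := mul_le_mul_of_nonneg_left h0 hq
    have m1 := mul_le_mul_of_nonneg_left h1 hp0
    have hpq : p * (1 - p) ≤ 1 / 4 := by nlinarith [sq_nonneg (p - 1 / 2)]
    have hD : p * (1 - p) * (a1 - a0) ^ 2 ≤ 1 / 4 * D :=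
      mul_le_mul hpq hsq (sq_nonneg _) (by norm_num)
    nlinarith

lemma abs_exp_sub_exp_le (a b c : ℝ) (hc : c = a ∨ c = b) :
    |Real.exp a - Real.exp b| ≤ |a - b| * Real.exp |a - b| * Real.exp c := by
  have key : ∀ x y : ℝ, x ≤ y → Real.exp y - Real.exp x ≤ (y - x) * Real.exp y := by
    intro x y hxy
    have h1 := Real.add_one_le_exp (x - y)
    have h2 : Real.exp x = Real.exp (x - y) * Real.exp y := by rw [← Real.exp_add]; ring_nf
    rw [h2]
    nlinarith [Real.exp_pos y]
  rw [mul_assoc, ← Real.exp_add]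
  have main : |Real.exp a - Real.exp b| ≤ |a - b| * Real.exp (max a b) := by
    rcases le_total a b with h | h
    · rw [max_eq_right h, abs_sub_comm, abs_sub_comm a b, abs_of_nonneg (by simpa using h),
        abs_of_nonneg (by simpa using h)]
      exact key a b h
    · rw [max_eq_left h, abs_of_nonneg (by simpa using h), abs_of_nonneg (by simpa using h)]
      exact key b a h
  refine main.trans (mul_le_mul_of_nonneg_left (Real.exp_le_exp.2 ?_) (abs_nonneg _))
  rcases hc with rfl | rfl
  · exact max_le (by linarith [abs_nonneg (c - b)]) (by linarith [neg_abs_le (c - b)])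
  · exact max_le (by linarith [le_abs_self (a - c)]) (by linarith [abs_nonneg (a - c)])

/-- Efron–Stein applied to `exp (θ F / 2)` bounds the Laplace transform at `θ` by the square of the
one at `θ / 2`. -/
lemma laplace_halving [DecidableEq α] (hp0 : 0 ≤ p) (hp1 : p ≤ 1) {F : Finset α → ℝ} {σ : ℝ}
    (hσ : 0 ≤ σ)
    (hF : ∀ G, G ⊆ E → ∑ e ∈ E, (F (insert e G) - F (G.erase e)) ^ 2 ≤ σ ^ 2)
    {θ : ℝ} (hθ : |θ| * σ ≤ 1 / 2) :
    bE p E (fun G => Real.exp (θ * F G)) ≤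
      Real.exp (2 * θ ^ 2 * σ ^ 2) * (bE p E (fun G => Real.exp (θ / 2 * F G))) ^ 2 := by
  have es := efron_stein (E := E) hp0 hp1 (fun G => Real.exp (θ / 2 * F G))
  set H := bE p E (fun G => Real.exp (θ * F G)) with hH
  have hsq : bE p E (fun G => Real.exp (θ / 2 * F G) ^ 2) = H :=
    bE_congr fun G _ => by rw [← Real.exp_nat_mul]; congr 1; push_cast; ring
  rw [hsq] at es
  have hu : θ ^ 2 * σ ^ 2 ≤ 1 / 4 := by
    have : θ ^ 2 * σ ^ 2 = (|θ| * σ) ^ 2 := by rw [mul_pow, sq_abs]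
    rw [this]; nlinarith [mul_nonneg (abs_nonneg θ) hσ]
  have hu0 : 0 ≤ θ ^ 2 * σ ^ 2 := by positivity
  have hbound : bE p E (fun G => ∑ e ∈ E, (1 / 4) *
      (Real.exp (θ / 2 * F (insert e G)) - Real.exp (θ / 2 * F (G.erase e))) ^ 2)
      ≤ θ ^ 2 * σ ^ 2 * H := by
    rw [hH, ← bE_const_mul]
    refine bE_mono hp0 hp1 fun G hG => ?_
    have hexp2 : Real.exp (1 / 4) ^ 2 ≤ 4 := by
      rw [← Real.exp_nat_mul]
      have := Real.exp_one_lt_d9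
      have h2 : Real.exp ((2:ℕ) * (1 / 4)) ≤ Real.exp 1 := Real.exp_le_exp.2 (by norm_num)
      linarith
    have hterm : ∀ e ∈ E, (1 / 4 : ℝ) *
        (Real.exp (θ / 2 * F (insert e G)) - Real.exp (θ / 2 * F (G.erase e))) ^ 2 ≤
        θ ^ 2 * Real.exp (θ * F G) * (F (insert e G) - F (G.erase e)) ^ 2 := by
      intro e he
      set a := F (insert e G)
      set b := F (G.erase e)
      have hab : |a - b| ≤ σ := by
        refine abs_le_of_sq_le_sq (le_trans ?_ (hF G hG)) hσ
        exact Finset.single_le_sum (f := fun e => (F (insert e G) - F (G.erase e)) ^ 2)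
          (fun _ _ => sq_nonneg _) he
      have hc : θ / 2 * F G = θ / 2 * a ∨ θ / 2 * F G = θ / 2 * b := by
        by_cases hG' : e ∈ G
        · left; simp [a, Finset.insert_eq_of_mem hG']
        · right; simp [b, Finset.erase_eq_of_notMem hG']
      have h1 := abs_exp_sub_exp_le _ _ _ hc
      have h2 : |θ / 2 * a - θ / 2 * b| = |θ| / 2 * |a - b| := by
        rw [← mul_sub, abs_mul, abs_div, abs_two]
      rw [h2] at h1
      have h3 : |θ| / 2 * |a - b| ≤ 1 / 4 := by
        nlinarith [mul_le_mul_of_nonneg_left hab (abs_nonneg θ)]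
      have h4 : |Real.exp (θ / 2 * a) - Real.exp (θ / 2 * b)| ≤
          |θ| / 2 * |a - b| * Real.exp (1 / 4) * Real.exp (θ / 2 * F G) := by
        refine h1.trans ?_
        gcongr
      have h5 := pow_le_pow_left₀ (abs_nonneg _) h4 2
      rw [sq_abs] at h5
      have h6 : (|θ| / 2 * |a - b| * Real.exp (1 / 4) * Real.exp (θ / 2 * F G)) ^ 2 =
          Real.exp (1 / 4) ^ 2 * (1 / 4 * (θ ^ 2 * Real.exp (θ * F G) * (a - b) ^ 2)) := by
        have : Real.exp (θ * F G) = Real.exp (θ / 2 * F G) ^ 2 := by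
          rw [← Real.exp_nat_mul]; congr 1; push_cast; ring
        rw [this]
        rw [← sq_abs θ, ← sq_abs (a - b)]; ring
      rw [h6] at h5
      have h7 : 0 ≤ 1 / 4 * (θ ^ 2 * Real.exp (θ * F G) * (a - b) ^ 2) := by positivity
      nlinarith [mul_le_mul_of_nonneg_right hexp2 h7]
    refine (Finset.sum_le_sum hterm).trans ?_
    rw [← Finset.mul_sum]
    have := mul_le_mul_of_nonneg_left (hF G hG)
      (mul_nonneg (sq_nonneg θ) (Real.exp_pos (θ * F G)).le)
    linarith
  set B := bE p E (fun G => Real.exp (θ / 2 * F G))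
  have h1 : H * (1 - θ ^ 2 * σ ^ 2) ≤ B ^ 2 := by nlinarith
  have h2 : 1 ≤ (1 - θ ^ 2 * σ ^ 2) * Real.exp (2 * θ ^ 2 * σ ^ 2) := by
    have := Real.add_one_le_exp (2 * θ ^ 2 * σ ^ 2)
    nlinarith
  have hH0 : 0 ≤ H := by
    rw [hH, ← bE_const (p := p) (E := E) 0]
    exact bE_mono hp0 hp1 fun G _ => (Real.exp_pos _).le
  have h3 := mul_le_mul_of_nonneg_right h1 (Real.exp_pos (2 * θ ^ 2 * σ ^ 2)).le
  nlinarith [mul_le_mul_of_nonneg_left h2 hH0]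

/-- Halving `j` times brings `θ` into `[-1, 1]`, where `exp x ≤ 1 + x + x²` and the mean-zero
hypothesis apply. -/
lemma laplace_iter [DecidableEq α] (hp0 : 0 ≤ p) (hp1 : p ≤ 1) {F : Finset α → ℝ} {σ : ℝ}
    (hσ : 0 ≤ σ)
    (hF : ∀ G, G ⊆ E → ∑ e ∈ E, (F (insert e G) - F (G.erase e)) ^ 2 ≤ σ ^ 2)
    (hF1 : ∀ G, G ⊆ E → |F G| ≤ 1) (hF0 : bE p E F = 0) (j : ℕ) :
    ∀ θ : ℝ, |θ| * σ ≤ 1 / 2 → |θ| ≤ 2 ^ j →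
    bE p E (fun G => Real.exp (θ * F G)) ≤ Real.exp (4 * θ ^ 2 * σ ^ 2 + θ ^ 2 / 2 ^ j) := by
  induction j with
  | zero =>
    intro θ _ hθ
    have h1 : bE p E (fun G => Real.exp (θ * F G)) ≤ bE p E (fun G => (1 + θ ^ 2) + θ * F G) := by
      refine bE_mono hp0 hp1 fun G hG => ?_
      have hx : |θ * F G| ≤ 1 := by
        rw [abs_mul]; exact mul_le_one₀ (by simpa using hθ) (abs_nonneg _) (hF1 G hG)
      have h2 := Real.abs_exp_sub_one_sub_id_le hx
      have h3 : (θ * F G) ^ 2 ≤ θ ^ 2 := by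
        rw [mul_pow]
        have : F G ^ 2 ≤ 1 := (sq_le_one_iff_abs_le_one _).2 (hF1 G hG)
        nlinarith [sq_nonneg θ]
      linarith [(abs_le.1 h2).2]
    rw [bE_add, bE_const, bE_const_mul, hF0] at h1
    refine h1.trans ?_
    have := Real.add_one_le_exp (θ ^ 2)
    have h4 : Real.exp (θ ^ 2) ≤ Real.exp (4 * θ ^ 2 * σ ^ 2 + θ ^ 2 / 2 ^ 0) :=
      Real.exp_le_exp.2 (by simp; positivity)
    linarith
  | succ j ih =>
    intro θ hθ hj
    have hhalf : |θ / 2| = |θ| / 2 := by rw [abs_div, abs_two]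
    have h1 := laplace_halving hp0 hp1 hσ hF hθ
    have h2 := ih (θ / 2) (by rw [hhalf]; nlinarith [mul_nonneg (abs_nonneg θ) hσ])
      (by rw [hhalf]; rw [pow_succ] at hj; linarith)
    have h0 : 0 ≤ bE p E (fun G => Real.exp (θ / 2 * F G)) := by
      rw [← bE_const (p := p) (E := E) 0]
      exact bE_mono hp0 hp1 fun G _ => (Real.exp_pos _).le
    refine h1.trans ((mul_le_mul_of_nonneg_left (pow_le_pow_left₀ h0 h2 2)
      (Real.exp_pos _).le).trans (le_of_eq ?_))
    rw [← Real.exp_nat_mul, ← Real.exp_add]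
    congr 1
    push_cast
    rw [pow_succ]
    field_simp
    ring

/-- A function with values in `[0,1]` and squared discrete gradient at most `σ²` has exponential
tails at scale `σ` around its mean. -/
lemma bE_concentration [DecidableEq α] (hp0 : 0 ≤ p) (hp1 : p ≤ 1) {F : Finset α → ℝ} {σ : ℝ}
    (hσ : 0 < σ)
    (hF : ∀ G, G ⊆ E → ∑ e ∈ E, (F (insert e G) - F (G.erase e)) ^ 2 ≤ σ ^ 2)
    (hF1 : ∀ G, G ⊆ E → F G ∈ Set.Icc (0:ℝ) 1) (t : ℝ) :
    bE p E (fun G => if t < |F G - bE p E F| then 1 else 0) ≤ 2 * Real.exp (2 - t / (2 * σ)) := by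
  set m := bE p E F with hm
  have hm0 : 0 ≤ m := by
    rw [hm, ← bE_const (p := p) (E := E) 0]
    exact bE_mono hp0 hp1 fun G hG => (hF1 G hG).1
  have hm1 : m ≤ 1 := by
    refine le_of_le_of_eq ?_ (bE_const (p := p) (E := E) 1)
    exact bE_mono hp0 hp1 fun G hG => (hF1 G hG).2
  obtain ⟨j, hj⟩ := pow_unbounded_of_one_lt (1 / (2 * σ) + (1 / (2 * σ)) ^ 2) (one_lt_two (α := ℝ))
  have hs : 0 < 1 / (2 * σ) := by positivity
  have key : ∀ θ : ℝ, |θ| = 1 / (2 * σ) →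
      bE p E (fun G => Real.exp (θ * (F G - m))) ≤ Real.exp 2 := by
    intro θ hθ
    have h := laplace_iter (F := fun G => F G - m) hp0 hp1 hσ.le
      (fun G hG => by simpa using hF G hG)
      (fun G hG => abs_le.2 ⟨by linarith [(hF1 G hG).1], by linarith [(hF1 G hG).2]⟩)
      (by rw [bE_sub, bE_const, hm, sub_self]) j θ (by rw [hθ]; field_simp; norm_num)
      (by rw [hθ]; nlinarith)
    refine h.trans (Real.exp_le_exp.2 ?_)
    have h1 : θ ^ 2 = (1 / (2 * σ)) ^ 2 := by rw [← sq_abs, hθ]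
    have h2 : θ ^ 2 / 2 ^ j ≤ 1 := by
      rw [div_le_one (by positivity), h1]; nlinarith
    have h3 : 4 * θ ^ 2 * σ ^ 2 = 1 := by rw [h1]; field_simp; norm_num
    linarith
  have k1 := key (1 / (2 * σ)) (abs_of_pos hs)
  have k2 := key (-(1 / (2 * σ))) (by rw [abs_neg, abs_of_pos hs])
  calc bE p E (fun G => if t < |F G - m| then 1 else 0)
      ≤ bE p E (fun G => Real.exp (- (t / (2 * σ))) * (Real.exp (1 / (2 * σ) * (F G - m)) +
          Real.exp (-(1 / (2 * σ)) * (F G - m)))) := by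
        refine bE_mono hp0 hp1 fun G _ => ?_
        split_ifs with h
        · rw [mul_add, ← Real.exp_add, ← Real.exp_add]
          rcases lt_abs.1 h with h | h
          · have : 1 ≤ Real.exp (-(t / (2 * σ)) + 1 / (2 * σ) * (F G - m)) := by
              rw [Real.one_le_exp_iff]
              have := mul_lt_mul_of_pos_left h hs
              have e : t / (2 * σ) = 1 / (2 * σ) * t := by ring
              rw [e]; linarith
            linarith [Real.exp_pos (-(t / (2 * σ)) + -(1 / (2 * σ)) * (F G - m))]
          · have : 1 ≤ Real.exp (-(t / (2 * σ)) + -(1 / (2 * σ)) * (F G - m)) := by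
              rw [Real.one_le_exp_iff]
              have := mul_lt_mul_of_pos_left h hs
              have e : t / (2 * σ) = 1 / (2 * σ) * t := by ring
              rw [e]; linarith
            linarith [Real.exp_pos (-(t / (2 * σ)) + 1 / (2 * σ) * (F G - m))]
        · positivity
    _ ≤ Real.exp (- (t / (2 * σ))) * (Real.exp 2 + Real.exp 2) := by
        rw [bE_const_mul, bE_add]
        exact mul_le_mul_of_nonneg_left (add_le_add k1 k2) (Real.exp_pos _).le
    _ = 2 * Real.exp (2 - t / (2 * σ)) := by
        rw [sub_eq_add_neg, Real.exp_add]; ring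

end bern

/-! ### Smooth test functions and Gaussian averages -/

/-- Smooth test functions: `h` has values in `[0,1]`, and `h1`, `h2` play the role of its first two
derivatives. Smoothness enters only through Taylor bounds: `A1` bounds the first derivative, `A2`
the second one and the remainder after the linear term, `A3` the remainder after the quadratic term.
In this form the class is visibly stable under rescaling and averaging. -/
structure Smooth3 (h h1 h2 : ℝ → ℝ) (A1 A2 A3 : ℝ) : Prop where
  cont : Continuous h
  cont1 : Continuous h1
  cont2 : Continuous h2
  range : ∀ x, h x ∈ Set.Icc (0:ℝ) 1
  b1 : ∀ x, |h1 x| ≤ A1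
  b2 : ∀ x, |h2 x| ≤ A2
  t1 : ∀ x y, |h (x + y) - h x - h1 x * y| ≤ A2 * y ^ 2
  t2 : ∀ x y, |h (x + y) - h x - h1 x * y - h2 x * y ^ 2 / 2| ≤ A3 * |y| ^ 3

lemma abs_le_of_deriv_le {f f' : ℝ → ℝ} {C : ℝ} (hC : 0 ≤ C) (m : ℕ)
    (hf : ∀ y, HasDerivAt f (f' y) y) (hb : ∀ y, |f' y| ≤ C * |y| ^ m) (h0 : f 0 = 0) (y : ℝ) :
    |f y| ≤ C * |y| ^ (m + 1) := by
  have h := (convex_closedBall (0:ℝ) |y|).norm_image_sub_le_of_norm_hasDerivWithin_le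
    (f := f) (f' := f') (C := C * |y| ^ m)
    (fun x _ => (hf x).hasDerivWithinAt)
    (fun x hx => by
      rw [Real.norm_eq_abs]
      refine (hb x).trans ?_
      have : |x| ≤ |y| := by simpa using hx
      gcongr)
    (x := 0) (y := y) (by simp) (by simp)
  rw [h0] at h
  simp only [Real.norm_eq_abs, sub_zero] at h
  rw [pow_succ, ← mul_assoc]
  exact h

/-- A smooth step from `1` on `x ≤ 0` to `0` on `x ≥ 1`, namely `1 - Real.smoothTransition`; its
derivatives vanish outside `[0,1]`, hence are bounded. -/
lemma exists_step : ∃ (h h1 h2 : ℝ → ℝ) (A : ℝ), 0 < A ∧ Smooth3 h h1 h2 A A A ∧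
    (∀ x ≤ 0, h x = 1) ∧ (∀ x, 1 ≤ x → h x = 0) := by
  set f : ℝ → ℝ := fun x => 1 - Real.smoothTransition x with hf
  have hfs : ContDiff ℝ 3 f := contDiff_const.sub Real.smoothTransition.contDiff
  have f1s : ContDiff ℝ 2 (deriv f) := by
    have := (contDiff_succ_iff_deriv (n := 2) (𝕜 := ℝ) (f := f)).1 (by exact_mod_cast hfs)
    exact this.2.2
  have f2s : ContDiff ℝ 1 (deriv (deriv f)) := by
    have := (contDiff_succ_iff_deriv (n := 1) (𝕜 := ℝ) (f := deriv f)).1 (by exact_mod_cast f1s)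
    exact this.2.2
  have f3s : Continuous (deriv (deriv (deriv f))) := f2s.continuous_deriv (by norm_num)
  have loc0 : ∀ x < 0, f =ᶠ[nhds x] fun _ => 1 := fun x hx => by
    filter_upwards [Iio_mem_nhds hx] with y hy
    simp [hf, Real.smoothTransition.zero_of_nonpos (le_of_lt hy)]
  have loc1 : ∀ x > 1, f =ᶠ[nhds x] fun _ => 0 := fun x hx => by
    filter_upwards [Ioi_mem_nhds hx] with y hy
    simp [hf, Real.smoothTransition.one_of_one_le (le_of_lt hy)]
  have locd : ∀ x, x ∉ Set.Icc (0:ℝ) 1 → ∃ c : ℝ, f =ᶠ[nhds x] fun _ => c := by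
    intro x hx
    by_cases h : x < 0
    · exact ⟨1, loc0 x h⟩
    · exact ⟨0, loc1 x (by by_contra h'; exact hx ⟨not_lt.1 h, not_lt.1 h'⟩)⟩
  have bdd : ∀ g : ℝ → ℝ, Continuous g → (∀ x, x ∉ Set.Icc (0:ℝ) 1 → g x = 0) →
      ∃ C, ∀ x, |g x| ≤ C := by
    intro g hg h0
    obtain ⟨C, hC⟩ := (isCompact_Icc (a := (0:ℝ)) (b := 1)).exists_bound_of_continuousOn
      hg.continuousOn
    refine ⟨max C 0, fun x => ?_⟩
    by_cases hx : x ∈ Set.Icc (0:ℝ) 1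
    · exact (hC x hx).trans (le_max_left _ _)
    · simp [h0 x hx]
  have z1 : ∀ x, x ∉ Set.Icc (0:ℝ) 1 → deriv f =ᶠ[nhds x] fun _ => 0 := fun x hx => by
    obtain ⟨c, hc⟩ := locd x hx
    simpa using hc.deriv
  have z2 : ∀ x, x ∉ Set.Icc (0:ℝ) 1 → deriv (deriv f) =ᶠ[nhds x] fun _ => 0 := fun x hx => by
    simpa using (z1 x hx).deriv
  have z3 : ∀ x, x ∉ Set.Icc (0:ℝ) 1 → deriv (deriv (deriv f)) =ᶠ[nhds x] fun _ => 0 :=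
    fun x hx => by simpa using (z2 x hx).deriv
  obtain ⟨C1, hC1⟩ := bdd _ f1s.continuous fun x hx => (z1 x hx).self_of_nhds
  obtain ⟨C2, hC2⟩ := bdd _ f2s.continuous fun x hx => (z2 x hx).self_of_nhds
  obtain ⟨C3, hC3⟩ := bdd _ f3s fun x hx => (z3 x hx).self_of_nhds
  set A := |C1| + |C2| + |C3| + 1 with hA
  have hA0 : 0 < A := by positivity
  have hA1 : ∀ x, |deriv f x| ≤ A := fun x => (hC1 x).trans (by
    linarith [le_abs_self C1, abs_nonneg C2, abs_nonneg C3])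
  have hA2 : ∀ x, |deriv (deriv f) x| ≤ A := fun x => (hC2 x).trans (by
    linarith [le_abs_self C2, abs_nonneg C1, abs_nonneg C3])
  have hA3 : ∀ x, |deriv (deriv (deriv f)) x| ≤ A := fun x => (hC3 x).trans (by
    linarith [le_abs_self C3, abs_nonneg C2, abs_nonneg C1])
  have d0 : ∀ x y, HasDerivAt (fun y => f (x + y)) (deriv f (x + y)) y := fun x y =>
    ((hfs.differentiable (by norm_num)).differentiableAt.hasDerivAt).comp_const_add x y
  have d1 : ∀ x y, HasDerivAt (fun y => deriv f (x + y)) (deriv (deriv f) (x + y)) y := fun x y =>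
    ((f1s.differentiable (by norm_num)).differentiableAt.hasDerivAt).comp_const_add x y
  have d2 : ∀ x y, HasDerivAt (fun y => deriv (deriv f) (x + y))
      (deriv (deriv (deriv f)) (x + y)) y := fun x y =>
    ((f2s.differentiable (by norm_num)).differentiableAt.hasDerivAt).comp_const_add x y
  have l2 : ∀ x y, |deriv (deriv f) (x + y) - deriv (deriv f) x| ≤ A * |y| ^ 1 := fun x y =>
    abs_le_of_deriv_le hA0.le 0 (fun y => (d2 x y).sub_const _)
      (fun y => by simpa using hA3 (x + y)) (by simp) y
  have l1 : ∀ x y, |deriv f (x + y) - deriv f x| ≤ A * |y| ^ 1 := fun x y =>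
    abs_le_of_deriv_le hA0.le 0 (fun y => (d1 x y).sub_const _)
      (fun y => by simpa using hA2 (x + y)) (by simp) y
  have l1' : ∀ x y, |deriv f (x + y) - deriv f x - deriv (deriv f) x * y| ≤ A * |y| ^ 2 :=
    fun x y => abs_le_of_deriv_le hA0.le 1
      (f' := fun y => deriv (deriv f) (x + y) - deriv (deriv f) x)
      (fun y => by
        simpa using ((d1 x y).sub_const (deriv f x)).sub
          ((hasDerivAt_id y).const_mul (deriv (deriv f) x)))
      (fun y => l2 x y) (by simp) y
  have l0 : ∀ x y, |f (x + y) - f x - deriv f x * y| ≤ A * |y| ^ 2 :=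
    fun x y => abs_le_of_deriv_le hA0.le 1
      (f' := fun y => deriv f (x + y) - deriv f x)
      (fun y => by
        simpa using ((d0 x y).sub_const (f x)).sub
          ((hasDerivAt_id y).const_mul (deriv f x)))
      (fun y => l1 x y) (by simp) y
  have l0' : ∀ x y, |f (x + y) - f x - deriv f x * y - deriv (deriv f) x * y ^ 2 / 2|
      ≤ A * |y| ^ 3 :=
    fun x y => abs_le_of_deriv_le hA0.le 2
      (f := fun y => f (x + y) - f x - deriv f x * y - deriv (deriv f) x * y ^ 2 / 2)
      (f' := fun y => deriv f (x + y) - deriv f x - deriv (deriv f) x * y)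
      (fun y => by
        have := (((d0 x y).sub_const (f x)).sub
          ((hasDerivAt_id y).const_mul (deriv f x))).sub
          (((hasDerivAt_pow 2 y).const_mul (deriv (deriv f) x)).div_const 2)
        exact this.congr_deriv (by push_cast; ring))
      (fun y => l1' x y) (by simp) y
  refine ⟨f, deriv f, deriv (deriv f), A, hA0,
    ⟨hfs.continuous, f1s.continuous, f2s.continuous, ?_, hA1, hA2, ?_, l0'⟩, ?_, ?_⟩
  · intro x
    exact ⟨by simp [hf, Real.smoothTransition.le_one], by simp [hf, Real.smoothTransition.nonneg]⟩
  · intro x y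
    simpa using l0 x y
  · intro x hx
    simp [hf, Real.smoothTransition.zero_of_nonpos hx]
  · intro x hx
    simp [hf, Real.smoothTransition.one_of_one_le hx]

lemma Smooth3.scale {h h1 h2 : ℝ → ℝ} {A : ℝ} (H : Smooth3 h h1 h2 A A A) (z : ℝ) {L : ℝ}
    (hL : 0 < L) :
    Smooth3 (fun x => h ((x - z) / L)) (fun x => h1 ((x - z) / L) / L)
      (fun x => h2 ((x - z) / L) / L ^ 2) (A / L) (A / L ^ 2) (A / L ^ 3) := by
  have e : ∀ x y, (x + y - z) / L = (x - z) / L + y / L := fun x y => by ring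
  refine ⟨H.cont.comp (by fun_prop), (H.cont1.comp (by fun_prop)).div_const _,
    (H.cont2.comp (by fun_prop)).div_const _, fun x => H.range _, fun x => ?_, fun x => ?_,
    fun x y => ?_, fun x y => ?_⟩
  · rw [abs_div, abs_of_pos hL]; exact div_le_div_of_nonneg_right (H.b1 _) hL.le
  · rw [abs_div, abs_of_pos (pow_pos hL 2)]
    exact div_le_div_of_nonneg_right (H.b2 _) (pow_pos hL 2).le
  · rw [e]
    have := H.t1 ((x - z) / L) (y / L)
    refine le_of_eq_of_le (congrArg _ (by ring)) (this.trans_eq (by ring))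
  · rw [e]
    have := H.t2 ((x - z) / L) (y / L)
    refine le_of_eq_of_le (congrArg _ (by ring)) (this.trans_eq ?_)
    rw [abs_div, abs_of_pos hL]; ring

lemma integrable_of_bdd {μ : Measure ℝ} [IsProbabilityMeasure μ] {f : ℝ → ℝ} (hf : Continuous f)
    {C : ℝ} (hC : ∀ x, |f x| ≤ C) : Integrable f μ :=
  Integrable.of_bound hf.aestronglyMeasurable C (Filter.Eventually.of_forall hC)

lemma Smooth3.abs_le_one {h h1 h2 : ℝ → ℝ} {A1 A2 A3 : ℝ} (H : Smooth3 h h1 h2 A1 A2 A3) (x : ℝ) :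
    |h x| ≤ 1 := abs_le.2 ⟨by linarith [(H.range x).1], (H.range x).2⟩

lemma continuous_avg {μ : Measure ℝ} [IsProbabilityMeasure μ] {f : ℝ → ℝ} (hf : Continuous f)
    {C : ℝ} (hC : ∀ x, |f x| ≤ C) : Continuous fun x => ∫ z, f (x + z) ∂μ :=
  continuous_of_dominated (bound := fun _ => C)
    (fun x => (hf.comp (by fun_prop : Continuous fun z => x + z)).aestronglyMeasurable)
    (fun x => Filter.Eventually.of_forall fun z => hC _) (integrable_const _)
    (Filter.Eventually.of_forall fun z => hf.comp (by fun_prop))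

lemma abs_integral_le_of_bdd {μ : Measure ℝ} [IsProbabilityMeasure μ] {f : ℝ → ℝ}
    {C : ℝ} (hC : ∀ x, |f x| ≤ C) : |∫ z, f z ∂μ| ≤ C := by
  have := norm_integral_le_of_norm_le_const (μ := μ) (f := f) (C := C)
    (Filter.Eventually.of_forall hC)
  simpa using this

/-- The class is stable under averaging over translates. -/
lemma Smooth3.avg {h h1 h2 : ℝ → ℝ} {A1 A2 A3 : ℝ} (H : Smooth3 h h1 h2 A1 A2 A3)
    (μ : Measure ℝ) [IsProbabilityMeasure μ] :
    Smooth3 (fun x => ∫ z, h (x + z) ∂μ) (fun x => ∫ z, h1 (x + z) ∂μ)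
      (fun x => ∫ z, h2 (x + z) ∂μ) A1 A2 A3 := by
  have i0 : ∀ x, Integrable (fun z => h (x + z)) μ := fun x =>
    integrable_of_bdd (H.cont.comp (by fun_prop)) (fun z => H.abs_le_one _)
  have i1 : ∀ x, Integrable (fun z => h1 (x + z)) μ := fun x =>
    integrable_of_bdd (H.cont1.comp (by fun_prop)) (fun z => H.b1 _)
  have i2 : ∀ x, Integrable (fun z => h2 (x + z)) μ := fun x =>
    integrable_of_bdd (H.cont2.comp (by fun_prop)) (fun z => H.b2 _)
  refine ⟨continuous_avg H.cont H.abs_le_one, continuous_avg H.cont1 H.b1,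
    continuous_avg H.cont2 H.b2, fun x => ⟨integral_nonneg fun z => (H.range _).1, ?_⟩,
    fun x => abs_integral_le_of_bdd fun z => H.b1 _,
    fun x => abs_integral_le_of_bdd fun z => H.b2 _, fun x y => ?_, fun x y => ?_⟩
  · exact (le_abs_self _).trans (abs_integral_le_of_bdd fun z => H.abs_le_one _)
  · have j1 : Integrable (fun z => h (x + y + z) - h (x + z)) μ := (i0 _).sub (i0 _)
    have j2 : Integrable (fun z => h1 (x + z) * y) μ := (i1 _).mul_const _
    rw [← integral_sub (i0 _) (i0 _), ← integral_mul_const, ← integral_sub j1 j2]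
    refine abs_integral_le_of_bdd fun z => ?_
    rw [show x + y + z = x + z + y by ring]
    exact H.t1 _ _
  · have j1 : Integrable (fun z => h (x + y + z) - h (x + z)) μ := (i0 _).sub (i0 _)
    have j2 : Integrable (fun z => h1 (x + z) * y) μ := (i1 _).mul_const _
    have j3 : Integrable (fun z => h (x + y + z) - h (x + z) - h1 (x + z) * y) μ := j1.sub j2
    have j4 : Integrable (fun z => h2 (x + z) * y ^ 2 / 2) μ := ((i2 _).mul_const _).div_const _
    rw [← integral_sub (i0 _) (i0 _), ← integral_mul_const, ← integral_sub j1 j2,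
      ← integral_mul_const, ← integral_div, ← integral_sub j3 j4]
    refine abs_integral_le_of_bdd fun z => ?_
    rw [show x + y + z = x + z + y by ring]
    exact H.t2 _ _

/-- The third absolute moment of the standard normal distribution. -/
def m3 : ℝ := ∫ y, |y| ^ 3 ∂(gaussianReal 0 1)

lemma m3_nonneg : 0 ≤ m3 := integral_nonneg fun y => by positivity

lemma integral_sq_gauss (w : NNReal) : ∫ y, y ^ 2 ∂(gaussianReal 0 w) = w := by
  have h := variance_fun_id_gaussianReal (μ := 0) (v := w)
  rw [variance_of_integral_eq_zero (by fun_prop) (by simp)] at h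
  exact h

lemma integral_cube_gauss (w : NNReal) :
    ∫ y, |y| ^ 3 ∂(gaussianReal 0 w) = √w ^ 3 * m3 := by
  have h : gaussianReal 0 w = (gaussianReal 0 1).map (fun x => √w * x) := by
    rw [gaussianReal_map_const_mul]
    congr 1
    · simp
    · ext; simp
  rw [h, integral_map (by fun_prop) (by fun_prop), m3, ← integral_const_mul]
  refine integral_congr_ae (Filter.Eventually.of_forall fun y => ?_)
  simp only
  rw [abs_mul, abs_of_nonneg (Real.sqrt_nonneg _), mul_pow]

lemma integrable_pow_gauss (w : NNReal) (m : ℕ) :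
    Integrable (fun y => |y| ^ m) (gaussianReal 0 w) := by
  have := (memLp_id_gaussianReal (μ := 0) (v := w) m).integrable_norm_pow'
  simpa using this

lemma integrable_id_gauss (w : NNReal) : Integrable (fun y : ℝ => y) (gaussianReal 0 w) := by
  exact (memLp_id_gaussianReal (μ := 0) (v := w) 1).integrable (by norm_num)

lemma Smooth3.gauss_taylor2 {h h1 h2 : ℝ → ℝ} {A1 A2 A3 : ℝ} (H : Smooth3 h h1 h2 A1 A2 A3)
    (w : NNReal) (x : ℝ) :
    |∫ y, h (x + y) ∂(gaussianReal 0 w) - h x - h2 x * w / 2| ≤ A3 * (√w ^ 3 * m3) := by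
  have i0 : Integrable (fun z => h (x + z)) (gaussianReal 0 w) :=
    integrable_of_bdd (H.cont.comp (by fun_prop)) (fun z => H.abs_le_one _)
  have i1 := integrable_id_gauss w
  have i2 : Integrable (fun y : ℝ => y ^ 2) (gaussianReal 0 w) := by
    simpa using integrable_pow_gauss w 2
  have e : ∫ y, (h (x + y) - h x - h1 x * y - h2 x * y ^ 2 / 2) ∂(gaussianReal 0 w)
      = ∫ y, h (x + y) ∂(gaussianReal 0 w) - h x - h2 x * w / 2 := by
    have j1 : Integrable (fun y => h (x + y) - h x) (gaussianReal 0 w) :=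
      i0.sub (integrable_const _)
    have j2 : Integrable (fun y => h (x + y) - h x - h1 x * y) (gaussianReal 0 w) :=
      j1.sub (i1.const_mul _)
    rw [integral_sub j2 ((i2.const_mul _).div_const _), integral_sub j1 (i1.const_mul _),
      integral_sub i0 (integrable_const _), integral_const_mul, integral_div, integral_const_mul,
      integral_sq_gauss, integral_id_gaussianReal]
    simp
  rw [← e, ← integral_cube_gauss, ← integral_const_mul]
  exact norm_integral_le_of_norm_le ((integrable_pow_gauss w 3).const_mul _)
    (Filter.Eventually.of_forall fun y => by rw [Real.norm_eq_abs]; exact H.t2 x y)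

lemma Smooth3.gauss_taylor1 {h h1 h2 : ℝ → ℝ} {A1 A2 A3 : ℝ} (H : Smooth3 h h1 h2 A1 A2 A3)
    (w : NNReal) (x : ℝ) :
    |∫ y, h (x + y) ∂(gaussianReal 0 w) - h x| ≤ A2 * w := by
  have i0 : Integrable (fun z => h (x + z)) (gaussianReal 0 w) :=
    integrable_of_bdd (H.cont.comp (by fun_prop)) (fun z => H.abs_le_one _)
  have i1 := integrable_id_gauss w
  have i2 : Integrable (fun y : ℝ => y ^ 2) (gaussianReal 0 w) := by
    simpa using integrable_pow_gauss w 2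
  have e : ∫ y, (h (x + y) - h x - h1 x * y) ∂(gaussianReal 0 w)
      = ∫ y, h (x + y) ∂(gaussianReal 0 w) - h x := by
    have j1 : Integrable (fun y => h (x + y) - h x) (gaussianReal 0 w) :=
      i0.sub (integrable_const _)
    rw [integral_sub j1 (i1.const_mul _),
      integral_sub i0 (integrable_const _), integral_const_mul, integral_id_gaussianReal]
    simp
  rw [← e, ← integral_sq_gauss, ← integral_const_mul]
  exact norm_integral_le_of_norm_le (i2.const_mul _)
    (Filter.Eventually.of_forall fun y => by rw [Real.norm_eq_abs]; exact H.t1 x y)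

lemma Smooth3.gauss_conv {h h1 h2 : ℝ → ℝ} {A1 A2 A3 : ℝ} (H : Smooth3 h h1 h2 A1 A2 A3)
    (v w : NNReal) (x : ℝ) :
    ∫ z, h (x + z) ∂(gaussianReal 0 (v + w)) =
      ∫ y, ∫ z, h (x + y + z) ∂(gaussianReal 0 v) ∂(gaussianReal 0 w) := by
  have e : gaussianReal 0 (v + w) = (gaussianReal 0 w) ∗ (gaussianReal 0 v) := by
    rw [gaussianReal_conv_gaussianReal, add_comm]; simp
  rw [e, integral_conv]
  · simp only [add_assoc]
  · exact integrable_of_bdd (H.cont.comp (by fun_prop)) (fun z => H.abs_le_one _)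

/-- Changing the Gaussian variance from `v` to `w` costs `A2 (w - v)`, since `N(0,w)` is the
convolution of `N(0,v)` and `N(0,w-v)`. -/
lemma Smooth3.gauss_var_compare {h h1 h2 : ℝ → ℝ} {A1 A2 A3 : ℝ} (H : Smooth3 h h1 h2 A1 A2 A3)
    {v w : NNReal} (hvw : v ≤ w) (x : ℝ) :
    |∫ z, h (x + z) ∂(gaussianReal 0 w) - ∫ z, h (x + z) ∂(gaussianReal 0 v)| ≤ A2 * (w - v) := by
  have e : w = v + (w - v) := (add_tsub_cancel_of_le hvw).symm
  have := (H.avg (gaussianReal 0 v)).gauss_taylor1 (w - v) x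
  rw [NNReal.coe_sub hvw] at this
  rw [← H.gauss_conv v (w - v) x, ← e] at this
  exact this

/-! ### Lindeberg replacement; conditioning on the number of elements -/

/-- Replacing one centred variable `c (ξ - p)`, `ξ ~ Bernoulli(p)`, by a Gaussian of the same
variance: the first two moments agree, so only third-order remainders are left. -/
lemma Smooth3.two_point {h h1 h2 : ℝ → ℝ} {A1 A2 A3 : ℝ} (H : Smooth3 h h1 h2 A1 A2 A3)
    (hA3 : 0 ≤ A3) {p c : ℝ} (hp0 : 0 ≤ p) (hp1 : p ≤ 1) (hc : |c| ≤ 1) (x : ℝ) :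
    |(1 - p) * h (x - c * p) + p * h (x + c * (1 - p)) -
      ∫ y, h (x + y) ∂(gaussianReal 0 (p * (1 - p) * c ^ 2).toNNReal)| ≤ A3 * (1 + m3) := by
  have hq : 0 ≤ 1 - p := by linarith
  set w := (p * (1 - p) * c ^ 2).toNNReal with hw
  have hw0 : 0 ≤ p * (1 - p) * c ^ 2 := by positivity
  have hwc : (w : ℝ) = p * (1 - p) * c ^ 2 := Real.coe_toNNReal _ hw0
  have hc2 : c ^ 2 ≤ 1 := (sq_le_one_iff_abs_le_one _).2 hc
  have hw1 : (w : ℝ) ≤ 1 := by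
    rw [hwc]; exact mul_le_one₀ (by nlinarith) (sq_nonneg _) hc2
  have hg := H.gauss_taylor2 w x
  have hs : √(w:ℝ) ^ 3 ≤ 1 := pow_le_one₀ (Real.sqrt_nonneg _) (Real.sqrt_le_one.2 hw1)
  have hg' : A3 * (√(w:ℝ) ^ 3 * m3) ≤ A3 * m3 :=
    mul_le_mul_of_nonneg_left (by nlinarith [m3_nonneg]) hA3
  have ha := H.t2 x (-(c * p))
  have hb := H.t2 x (c * (1 - p))
  have hab : A3 * |-(c * p)| ^ 3 ≤ A3 := by
    have : |-(c * p)| ^ 3 ≤ 1 := pow_le_one₀ (abs_nonneg _) (by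
      rw [abs_neg, abs_mul, abs_of_nonneg hp0]; exact mul_le_one₀ hc hp0 hp1)
    nlinarith
  have hbb : A3 * |c * (1 - p)| ^ 3 ≤ A3 := by
    have : |c * (1 - p)| ^ 3 ≤ 1 := pow_le_one₀ (abs_nonneg _) (by
      rw [abs_mul, abs_of_nonneg hq]; exact mul_le_one₀ hc hq (by linarith))
    nlinarith
  rw [← sub_eq_add_neg] at ha
  obtain ⟨a1, a2⟩ := abs_le.1 (ha.trans hab)
  obtain ⟨b1, b2⟩ := abs_le.1 (hb.trans hbb)
  obtain ⟨g1, g2⟩ := abs_le.1 (hg.trans hg')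
  rw [hwc] at g1 g2
  have u1 := mul_le_mul_of_nonneg_left a1 hq
  have u2 := mul_le_mul_of_nonneg_left a2 hq
  have u3 := mul_le_mul_of_nonneg_left b1 hp0
  have u4 := mul_le_mul_of_nonneg_left b2 hp0
  refine abs_le.2 ⟨by linarith, by linarith⟩

/-- Lindeberg replacement, one element of `E` at a time. The induction also replaces `h` by its
Gaussian averages, which is harmless by `Smooth3.avg`. -/
lemma lindeberg {α : Type*} [DecidableEq α] {h h1 h2 : ℝ → ℝ} {A1 A2 A3 : ℝ}
    (H : Smooth3 h h1 h2 A1 A2 A3)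
    (hA3 : 0 ≤ A3) {p : ℝ} (hp0 : 0 ≤ p) (hp1 : p ≤ 1) {c : α → ℝ} (hc : ∀ e, |c e| ≤ 1)
    (E : Finset α) : ∀ x : ℝ,
    |bE p E (fun G => h (x + ∑ e ∈ E, c e * ((if e ∈ G then 1 else 0) - p))) -
      ∫ y, h (x + y) ∂(gaussianReal 0 (p * (1 - p) * ∑ e ∈ E, c e ^ 2).toNNReal)|
      ≤ #E * (A3 * (1 + m3)) := by
  have hq : 0 ≤ 1 - p := by linarith
  induction E using Finset.induction_on with
  | empty => intro x; simp [bE_empty]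
  | insert e E he ih =>
    intro x
    rw [bE_insert he]
    have e0 : bE p E (fun G => h (x + ∑ e' ∈ insert e E, c e' * ((if e' ∈ G then 1 else 0) - p)))
        = bE p E (fun G => h ((x - c e * p) +
          ∑ e' ∈ E, c e' * ((if e' ∈ G then 1 else 0) - p))) := by
      refine bE_congr fun G hG => ?_
      rw [Finset.sum_insert he, if_neg fun h => he (hG h)]
      congr 1; ring
    have e1 : bE p E (fun G => h (x + ∑ e' ∈ insert e E,
          c e' * ((if e' ∈ insert e G then 1 else 0) - p)))
        = bE p E (fun G => h ((x + c e * (1 - p)) +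
          ∑ e' ∈ E, c e' * ((if e' ∈ G then 1 else 0) - p))) := by
      refine bE_congr fun G hG => ?_
      rw [Finset.sum_insert he, if_pos (Finset.mem_insert_self e G), ← add_assoc]
      congr 2
      refine Finset.sum_congr rfl fun e' he' => ?_
      have : e' ≠ e := fun h => he (h ▸ he')
      simp [Finset.mem_insert, this]
    rw [e0, e1]
    set v := (p * (1 - p) * ∑ e ∈ E, c e ^ 2).toNNReal with hv
    have hsplit : (p * (1 - p) * ∑ e ∈ insert e E, c e ^ 2).toNNReal =
        v + (p * (1 - p) * c e ^ 2).toNNReal := by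
      rw [hv, ← Real.toNNReal_add (by positivity) (by positivity), Finset.sum_insert he]
      congr 1; ring
    rw [hsplit, H.gauss_conv]
    have i0 := ih (x - c e * p)
    have i1 := ih (x + c e * (1 - p))
    have ht := (H.avg (gaussianReal 0 v)).two_point hA3 hp0 hp1 (hc e) x
    rw [Finset.card_insert_of_notMem he]
    push_cast
    obtain ⟨a1, a2⟩ := abs_le.1 i0
    obtain ⟨b1, b2⟩ := abs_le.1 i1
    obtain ⟨g1, g2⟩ := abs_le.1 ht
    have u1 := mul_le_mul_of_nonneg_left a1 hq
    have u2 := mul_le_mul_of_nonneg_left a2 hq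
    have u3 := mul_le_mul_of_nonneg_left b1 hp0
    have u4 := mul_le_mul_of_nonneg_left b2 hp0
    refine abs_le.2 ⟨by linarith, by linarith⟩

/-- The weights of `Bin(N, M/N)`, multiplied by `N ^ N` so as to be natural numbers, increase
below `M`. -/
lemma choose_mode_step_up {N M j : ℕ} (hM : M ≤ N) (hj : j < M) :
    N.choose j * M ^ j * (N - M) ^ (N - j) ≤
      N.choose (j + 1) * M ^ (j + 1) * (N - M) ^ (N - (j + 1)) := by
  obtain ⟨r, rfl⟩ : ∃ r, M = j + 1 + r := ⟨M - (j + 1), by omega⟩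
  obtain ⟨s, rfl⟩ : ∃ s, N = j + 1 + r + s := ⟨N - (j + 1 + r), by omega⟩
  have h := Nat.choose_succ_right_eq (j + 1 + r + s) j
  rw [show j + 1 + r + s - (j + 1 + r) = s by omega, show j + 1 + r + s - j = r + s + 1 by omega,
    show j + 1 + r + s - (j + 1) = r + s by omega]
  rw [show j + 1 + r + s - j = r + s + 1 by omega] at h
  set a := (j + 1 + r + s).choose j
  set b := (j + 1 + r + s).choose (j + 1)
  have key : a * s ≤ b * (j + 1 + r) := by
    have : (a * s) * (j + 1) ≤ (b * (j + 1 + r)) * (j + 1) := by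
      calc (a * s) * (j + 1) = a * (s * (j + 1)) := by ring
        _ ≤ a * ((r + s + 1) * (j + 1 + r)) := Nat.mul_le_mul_left _ (by nlinarith)
        _ = (b * (j + 1)) * (j + 1 + r) := by rw [h]; ring
        _ = _ := by ring
    exact Nat.le_of_mul_le_mul_right this (by omega)
  calc a * (j + 1 + r) ^ j * s ^ (r + s + 1) = (a * s) * ((j + 1 + r) ^ j * s ^ (r + s)) := by ring
    _ ≤ (b * (j + 1 + r)) * ((j + 1 + r) ^ j * s ^ (r + s)) := Nat.mul_le_mul_right _ key
    _ = _ := by ring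

lemma choose_mode_step_down {N M j : ℕ} (hj : M ≤ j) (hjN : j < N) :
    N.choose (j + 1) * M ^ (j + 1) * (N - M) ^ (N - (j + 1)) ≤
      N.choose j * M ^ j * (N - M) ^ (N - j) := by
  obtain ⟨r, rfl⟩ : ∃ r, j = M + r := ⟨j - M, by omega⟩
  obtain ⟨s, rfl⟩ : ∃ s, N = M + r + 1 + s := ⟨N - (M + r + 1), by omega⟩
  have h := Nat.choose_succ_right_eq (M + r + 1 + s) (M + r)
  rw [show M + r + 1 + s - (M + r + 1) = s by omega,
    show M + r + 1 + s - (M + r) = s + 1 by omega, show M + r + 1 + s - M = r + 1 + s by omega]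
  rw [show M + r + 1 + s - (M + r) = s + 1 by omega] at h
  set a := (M + r + 1 + s).choose (M + r)
  set b := (M + r + 1 + s).choose (M + r + 1)
  have key : b * M ≤ a * (r + 1 + s) := by
    have : (b * M) * (M + r + 1) ≤ (a * (r + 1 + s)) * (M + r + 1) := by
      calc (b * M) * (M + r + 1) = (b * (M + r + 1)) * M := by ring
        _ = a * ((s + 1) * M) := by rw [h]; ring
        _ ≤ a * ((r + 1 + s) * (M + r + 1)) := Nat.mul_le_mul_left _ (by nlinarith)
        _ = _ := by ring
    exact Nat.le_of_mul_le_mul_right this (by omega)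
  calc b * M ^ (M + r + 1) * (r + 1 + s) ^ s
      = (b * M) * (M ^ (M + r) * (r + 1 + s) ^ s) := by ring
    _ ≤ (a * (r + 1 + s)) * (M ^ (M + r) * (r + 1 + s) ^ s) := Nat.mul_le_mul_right _ key
    _ = _ := by ring

/-- `M` is a mode of `Bin(N, M/N)`. -/
lemma choose_mode {N M j : ℕ} (hM : M ≤ N) (hj : j ≤ N) :
    N.choose j * M ^ j * (N - M) ^ (N - j) ≤ N.choose M * M ^ M * (N - M) ^ (N - M) := by
  rcases le_total j M with h | h
  · exact Nat.decreasingInduction'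
      (P := fun i => N.choose i * M ^ i * (N - M) ^ (N - i) ≤ N.choose M * M ^ M * (N - M) ^ (N - M))
      (fun i hi _ ih => (choose_mode_step_up hM hi).trans ih) h le_rfl
  · induction j, h using Nat.le_induction with
    | base => exact le_rfl
    | succ i hi ih => exact (choose_mode_step_down hi (by omega)).trans (ih (by omega))

/-- `Bin(N, M/N)` gives mass at least `1/(N+1)` to `M`, the largest of its `N+1` weights. -/
lemma mode_lower {N M : ℕ} (hN : 0 < N) (hM : M ≤ N) :
    1 ≤ ((N:ℝ) + 1) * ((N.choose M : ℝ) * ((M:ℝ) / N) ^ M * (1 - (M:ℝ) / N) ^ (N - M)) := by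
  have h1 : N ^ N = ∑ j ∈ Finset.range (N + 1), N.choose j * M ^ j * (N - M) ^ (N - j) := by
    have := add_pow M (N - M) N
    rw [Nat.add_sub_cancel' hM] at this
    rw [this]
    exact Finset.sum_congr rfl fun j _ => by simp; ring
  have h2 : N ^ N ≤ (N + 1) * (N.choose M * M ^ M * (N - M) ^ (N - M)) := by
    rw [h1]
    refine (Finset.sum_le_card_nsmul _ _ _ fun j hj => choose_mode hM
      (Nat.lt_succ_iff.1 (Finset.mem_range.1 hj))).trans ?_
    simp
  have hN' : (0:ℝ) < N := by exact_mod_cast hN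
  have h3 : ((N:ℝ)) ^ N ≤ (N + 1) * (N.choose M * (M:ℝ) ^ M * ((N:ℝ) - M) ^ (N - M)) := by
    have : ((N ^ N : ℕ) : ℝ) ≤ (((N + 1) * (N.choose M * M ^ M * (N - M) ^ (N - M)) : ℕ) : ℝ) := by
      exact_mod_cast h2
    push_cast [Nat.cast_sub hM] at this
    exact this
  have h4 : ((N.choose M : ℝ) * ((M:ℝ) / N) ^ M * (1 - (M:ℝ) / N) ^ (N - M)) =
      (N.choose M * (M:ℝ) ^ M * ((N:ℝ) - M) ^ (N - M)) / N ^ N := by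
    have : (1 - (M:ℝ) / N) = ((N:ℝ) - M) / N := by field_simp
    rw [this, div_pow, div_pow]
    have e : (N:ℝ) ^ N = N ^ M * N ^ (N - M) := by rw [← pow_add, Nat.add_sub_cancel' hM]
    rw [e]; field_simp
  rw [h4, ← mul_div_assoc, le_div_iff₀ (by positivity), one_mul]
  exact h3

/-- Conditioning the binomial random subset on having exactly `M` elements increases probabilities
by a factor of at most `#E + 1`. -/
lemma transfer {α : Type*} (E : Finset α) {M : ℕ} (hE : 0 < #E) (hM : M ≤ #E)
    (B : Finset α → Prop) [DecidablePred B] :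
    (#((E.powersetCard M).filter B) : ℝ) / #(E.powersetCard M) ≤
      ((#E : ℝ) + 1) * bE ((M:ℝ) / #E) E (fun G => if B G then 1 else 0) := by
  set p := (M:ℝ) / #E with hp
  have hE' : (0:ℝ) < #E := by exact_mod_cast hE
  have hp0 : 0 ≤ p := by positivity
  have hp1 : p ≤ 1 := (div_le_one hE').2 (by exact_mod_cast hM)
  have hw : 0 ≤ p ^ M * (1 - p) ^ (#E - M) := mul_nonneg (pow_nonneg hp0 _)
    (pow_nonneg (by linarith) _)
  have h1 : (#((E.powersetCard M).filter B) : ℝ) * (p ^ M * (1 - p) ^ (#E - M)) ≤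
      bE p E (fun G => if B G then 1 else 0) := by
    rw [← nsmul_eq_mul, ← Finset.sum_const, bE]
    have hsub : (E.powersetCard M).filter B ⊆ E.powerset := fun G hG =>
      Finset.mem_powerset.2 (Finset.mem_powersetCard.1 (Finset.mem_filter.1 hG).1).1
    refine le_trans (le_of_eq ?_) (Finset.sum_le_sum_of_subset_of_nonneg hsub fun G _ _ => ?_)
    · refine Finset.sum_congr rfl fun G hG => ?_
      obtain ⟨h, hB⟩ := Finset.mem_filter.1 hG
      rw [if_pos hB, (Finset.mem_powersetCard.1 h).2, mul_one]
    · refine mul_nonneg (mul_nonneg (pow_nonneg hp0 _) (pow_nonneg (by linarith) _)) ?_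
      split_ifs <;> norm_num
  have h2 := mode_lower hE hM
  rw [← hp] at h2
  have hc : (0:ℝ) < ((#E).choose M : ℝ) := by exact_mod_cast Nat.choose_pos hM
  rw [Finset.card_powersetCard, div_le_iff₀ hc]
  set x : ℝ := (#((E.powersetCard M).filter B) : ℝ)
  have hx : 0 ≤ x := Nat.cast_nonneg _
  calc x = x * 1 := by ring
    _ ≤ x * (((#E:ℝ) + 1) * (((#E).choose M : ℝ) * p ^ M * (1 - p) ^ (#E - M))) :=
        mul_le_mul_of_nonneg_left h2 hx
    _ = ((#E:ℝ) + 1) * ((#E).choose M : ℝ) * (x * (p ^ M * (1 - p) ^ (#E - M))) := by ring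
    _ ≤ ((#E:ℝ) + 1) * ((#E).choose M : ℝ) * bE p E (fun G => if B G then 1 else 0) :=
        mul_le_mul_of_nonneg_left h1 (by positivity)
    _ = _ := by ring

/-! ### Covariances of edge indicators of a uniform `k`-set -/

/-- A Bessel-type inequality for almost orthogonal functions `S ↦ c S e` on `Ω`: the absolute row
sums of their Gram matrix bound its operator norm (Schur test). -/
lemma bessel {ω ι : Type*} (Ω : Finset ω) (E : Finset ι) (c : ω → ι → ℝ) {D A : ℝ} (hD : 0 ≤ D)
    (hrow : ∀ e ∈ E, ∑ f ∈ E, |∑ S ∈ Ω, c S e * c S f| ≤ D * #Ω)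
    (g : ω → ℝ) (hg : ∀ S ∈ Ω, |g S| ≤ A) :
    ∑ e ∈ E, (∑ S ∈ Ω, g S * c S e) ^ 2 ≤ A ^ 2 * D * (#Ω : ℝ) ^ 2 := by
  set y : ι → ℝ := fun e => ∑ S ∈ Ω, g S * c S e with hy
  set Y := ∑ e ∈ E, y e ^ 2 with hY
  have hY0 : 0 ≤ Y := Finset.sum_nonneg fun e _ => sq_nonneg _
  have h1 : Y = ∑ S ∈ Ω, g S * ∑ e ∈ E, y e * c S e := by
    simp only [Finset.mul_sum]
    rw [Finset.sum_comm]
    refine Finset.sum_congr rfl fun e _ => ?_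
    rw [sq]; nth_rewrite 2 [hy]; simp only [Finset.mul_sum]
    exact Finset.sum_congr rfl fun S _ => by ring
  have h2 : Y ^ 2 ≤ (∑ S ∈ Ω, g S ^ 2) * ∑ S ∈ Ω, (∑ e ∈ E, y e * c S e) ^ 2 := by
    rw [h1]; exact Finset.sum_mul_sq_le_sq_mul_sq _ _ _
  have h3 : ∑ S ∈ Ω, g S ^ 2 ≤ A ^ 2 * #Ω := by
    rw [mul_comm, ← nsmul_eq_mul]
    exact Finset.sum_le_card_nsmul _ _ _ fun S hS => sq_le_sq' (abs_le.1 (hg S hS)).1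
      (abs_le.1 (hg S hS)).2
  have h4 : ∑ S ∈ Ω, (∑ e ∈ E, y e * c S e) ^ 2 =
      ∑ e ∈ E, ∑ f ∈ E, y e * y f * ∑ S ∈ Ω, c S e * c S f := by
    simp only [sq, Finset.sum_mul_sum]
    rw [Finset.sum_comm]
    refine Finset.sum_congr rfl fun e _ => ?_
    rw [Finset.sum_comm]
    simp only [Finset.mul_sum]
    exact Finset.sum_congr rfl fun f _ => Finset.sum_congr rfl fun S _ => by ring
  set R : ι → ι → ℝ := fun e f => |∑ S ∈ Ω, c S e * c S f| with hR
  have hRs : ∀ e f, R e f = R f e := fun e f => by simp [hR, mul_comm]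
  have h5 : ∑ e ∈ E, ∑ f ∈ E, y e * y f * ∑ S ∈ Ω, c S e * c S f ≤
      ∑ e ∈ E, ∑ f ∈ E, (y e ^ 2 / 2 * R e f + y f ^ 2 / 2 * R e f) := by
    refine Finset.sum_le_sum fun e _ => Finset.sum_le_sum fun f _ => ?_
    have a1 : y e * y f * ∑ S ∈ Ω, c S e * c S f ≤ |y e * y f| * R e f := by
      rw [hR, ← abs_mul]; exact le_abs_self _
    have a2 : |y e * y f| ≤ y e ^ 2 / 2 + y f ^ 2 / 2 := by
      rw [abs_le]; constructor <;> nlinarith [sq_nonneg (y e - y f), sq_nonneg (y e + y f)]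
    have a3 : 0 ≤ R e f := abs_nonneg _
    nlinarith
  have h6 : ∑ e ∈ E, ∑ f ∈ E, (y e ^ 2 / 2 * R e f + y f ^ 2 / 2 * R e f) ≤ D * #Ω * Y := by
    simp only [Finset.sum_add_distrib]
    have a1 : ∑ e ∈ E, ∑ f ∈ E, y f ^ 2 / 2 * R e f = ∑ e ∈ E, ∑ f ∈ E, y e ^ 2 / 2 * R e f := by
      rw [Finset.sum_comm]
      exact Finset.sum_congr rfl fun e _ => Finset.sum_congr rfl fun f _ => by rw [hRs]
    rw [a1, ← two_mul, Finset.mul_sum, hY, Finset.mul_sum]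
    refine Finset.sum_le_sum fun e he => ?_
    rw [← Finset.mul_sum]
    have := mul_le_mul_of_nonneg_left (hrow e he) (sq_nonneg (y e))
    nlinarith
  have h7 : ∑ S ∈ Ω, (∑ e ∈ E, y e * c S e) ^ 2 ≤ D * #Ω * Y := by
    rw [h4]; exact h5.trans h6
  have h8 : Y ^ 2 ≤ (A ^ 2 * D * (#Ω : ℝ) ^ 2) * Y := by
    refine h2.trans ((mul_le_mul h3 h7 (Finset.sum_nonneg fun S _ => sq_nonneg _)
      (by positivity)).trans (le_of_eq (by ring)))
  rcases hY0.eq_or_lt with h | h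
  · rw [← h]; positivity
  · nlinarith

/-- The indicator of `e ⊆ S`. -/
def ind {n : ℕ} (S : Finset (Fin n)) (e : Sym2 (Fin n)) : ℝ := if e.toFinset ⊆ S then 1 else 0

/-- The indicator of `e ⊆ S` minus its mean `K/N` over uniform `k`-sets `S`. -/
def cof (n k : ℕ) (S : Finset (Fin n)) (e : Sym2 (Fin n)) : ℝ := ind S e - Kr k / Nr n

lemma mem_completeEdges {n : ℕ} {e : Sym2 (Fin n)} : e ∈ completeEdges n ↔ ¬ e.IsDiag := by
  simp [completeEdges]

lemma toFinset_subset_iff {n : ℕ} {S : Finset (Fin n)} {e : Sym2 (Fin n)} :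
    e.toFinset ⊆ S ↔ ∀ v ∈ e, v ∈ S := by
  simp [Finset.subset_iff]

lemma card_completeEdges (n : ℕ) : #(completeEdges n) = n.choose 2 := by
  classical
  have := Sym2.card_subtype_not_diag (α := Fin n)
  rw [Fintype.card_fin, Fintype.card_subtype] at this
  rw [← this, completeEdges]

lemma cast_choose_two (n : ℕ) : (n.choose 2 : ℝ) = Nr n := by
  rw [Nat.cast_choose_two, Nr]

lemma sum_ind {n : ℕ} (S : Finset (Fin n)) : ∑ e ∈ completeEdges n, ind S e = Kr #S := by
  classical
  have h : (completeEdges n).filter (fun e => e.toFinset ⊆ S) = S.offDiag.image Sym2.mk.uncurry := by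
    ext e
    induction e using Sym2.ind with
    | _ a b =>
      simp only [Finset.mem_filter, mem_completeEdges, toFinset_subset_iff, Finset.mem_image,
        Finset.mem_offDiag, Prod.exists]
      constructor
      · rintro ⟨h1, h2⟩
        exact ⟨a, b, ⟨h2 a (by simp), h2 b (by simp), by simpa using h1⟩, rfl⟩
      · rintro ⟨x, y, ⟨hx, hy, hxy⟩, h⟩
        simp only [Function.uncurry_apply_pair] at h
        rw [← h]
        refine ⟨by simpa using hxy, fun v hv => ?_⟩
        rcases Sym2.mem_iff.1 hv with rfl | rfl <;> assumption
  simp only [ind]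
  rw [Finset.sum_boole, h, Sym2.card_image_offDiag, cast_choose_two]
  rfl

lemma sum_cof {n k : ℕ} (hn : 2 ≤ n) {S : Finset (Fin n)} (hS : S ∈ kSets n k) :
    ∑ e ∈ completeEdges n, cof n k S e = 0 := by
  have hk : #S = k := (Finset.mem_powersetCard.1 hS).2
  simp only [cof]
  rw [Finset.sum_sub_distrib, sum_ind, hk, Finset.sum_const, card_completeEdges, nsmul_eq_mul,
    cast_choose_two, mul_div_cancel₀, sub_self]
  have : (2:ℝ) ≤ n := by exact_mod_cast hn
  rw [Nr]
  have : 0 < (n:ℝ) * (n - 1) / 2 := by apply div_pos (mul_pos _ _) <;> linarith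
  exact this.ne'

lemma card_supersets (n k : ℕ) (T : Finset (Fin n)) :
    #((kSets n k).filter (fun S => T ⊆ S)) =
      if #T ≤ k then (n - #T).choose (k - #T) else 0 := by
  split_ifs with h
  · have e : (n - #T).choose (k - #T) = #((Tᶜ).powersetCard (k - #T)) := by
      rw [Finset.card_powersetCard, Finset.card_compl, Fintype.card_fin]
    rw [e]
    refine Finset.card_nbij' (fun S => S \ T) (fun U => U ∪ T) ?_ ?_ ?_ ?_
    · intro S hS
      simp only [kSets, Finset.coe_filter, Finset.mem_powersetCard, Set.mem_ofPred_eq] at hS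
      simp only [Finset.mem_coe, Finset.mem_powersetCard]
      refine ⟨fun x hx => by simp at hx ⊢; exact hx.2, ?_⟩
      rw [Finset.card_sdiff_of_subset hS.2, hS.1.2]
    · intro U hU
      simp only [Finset.mem_coe, Finset.mem_powersetCard] at hU
      simp only [kSets, Finset.coe_filter, Finset.mem_powersetCard, Set.mem_ofPred_eq]
      refine ⟨⟨Finset.subset_univ _, ?_⟩, Finset.subset_union_right⟩
      rw [Finset.card_union_of_disjoint (Finset.disjoint_left.2 fun x hx =>
        Finset.mem_compl.1 (hU.1 hx)), hU.2]
      omega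
    · intro S hS
      simp only [kSets, Finset.coe_filter, Finset.mem_powersetCard, Set.mem_ofPred_eq] at hS
      exact Finset.sdiff_union_of_subset hS.2
    · intro U hU
      simp only [Finset.mem_coe, Finset.mem_powersetCard] at hU
      exact Finset.union_sdiff_cancel_right (Finset.disjoint_left.2 fun x hx =>
        Finset.mem_compl.1 (hU.1 hx))
  · rw [Finset.card_eq_zero, Finset.filter_eq_empty_iff]
    intro S hS hT
    exact h ((Finset.card_le_card hT).trans (Finset.mem_powersetCard.1 hS).2.le)

lemma ind_mul_ind {n : ℕ} (S : Finset (Fin n)) (e f : Sym2 (Fin n)) :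
    ind S e * ind S f = if e.toFinset ∪ f.toFinset ⊆ S then 1 else 0 := by
  simp only [ind, Finset.union_subset_iff]
  split_ifs <;> simp_all

lemma sum_ind_kSets (n k : ℕ) {e f : Sym2 (Fin n)} (he : e ∈ completeEdges n)
    (hf : f ∈ completeEdges n) : ∑ S ∈ kSets n k, ind S e = ∑ S ∈ kSets n k, ind S f := by
  simp only [ind]
  rw [Finset.sum_boole, Finset.sum_boole, card_supersets, card_supersets,
    Sym2.card_toFinset_of_not_isDiag _ (mem_completeEdges.1 he),
    Sym2.card_toFinset_of_not_isDiag _ (mem_completeEdges.1 hf)]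

lemma Nr_pos {n : ℕ} (hn : 2 ≤ n) : 0 < Nr n := by
  have : (2:ℝ) ≤ n := by exact_mod_cast hn
  rw [Nr]
  apply div_pos (mul_pos _ _) <;> linarith

lemma sum_cof_kSets {n k : ℕ} (hn : 2 ≤ n) {e : Sym2 (Fin n)} (he : e ∈ completeEdges n) :
    ∑ S ∈ kSets n k, cof n k S e = 0 := by
  have h1 : ∑ f ∈ completeEdges n, ∑ S ∈ kSets n k, cof n k S f = 0 := by
    rw [Finset.sum_comm]
    exact Finset.sum_eq_zero fun S hS => sum_cof hn hS
  have h2 : ∀ f ∈ completeEdges n, ∑ S ∈ kSets n k, cof n k S f =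
      ∑ S ∈ kSets n k, cof n k S e := by
    intro f hf
    simp only [cof, Finset.sum_sub_distrib, sum_ind_kSets n k hf he]
  rw [Finset.sum_congr rfl h2, Finset.sum_const, card_completeEdges, nsmul_eq_mul,
    cast_choose_two] at h1
  exact (mul_eq_zero.1 h1).resolve_left (Nr_pos hn).ne'

lemma abs_cof_le {n k : ℕ} (hn : 2 ≤ n) (hk : k ≤ n) (S : Finset (Fin n)) (e : Sym2 (Fin n)) :
    |cof n k S e| ≤ 1 := by
  have h1 : Kr k / Nr n ≤ 1 := by
    rw [div_le_one (Nr_pos hn), ← cast_choose_two]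
    have : Kr k = Nr k := rfl
    rw [this, ← cast_choose_two]
    exact_mod_cast Nat.choose_le_choose 2 hk
  have h0 : 0 ≤ Kr k / Nr n := by
    refine div_nonneg ?_ (Nr_pos hn).le
    have : Kr k = Nr k := rfl
    rw [this, ← cast_choose_two]
    positivity
  rw [cof, ind, abs_le]
  split_ifs <;> constructor <;> linarith

lemma card_touching {n : ℕ} {e : Sym2 (Fin n)} (E : Finset (Sym2 (Fin n))) :
    #(E.filter (fun f => ¬ Disjoint e.toFinset f.toFinset)) ≤ 2 * n := by
  classical
  induction e using Sym2.ind with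
  | _ a b =>
    have hsub : E.filter (fun f => ¬ Disjoint (s(a, b)).toFinset f.toFinset) ⊆
        (Finset.univ.image fun x => s(a, x)) ∪ (Finset.univ.image fun x => s(b, x)) := by
      intro f hf
      obtain ⟨x, hx, hxf⟩ := Finset.not_disjoint_iff.1 (Finset.mem_filter.1 hf).2
      rw [Sym2.mem_toFinset] at hx hxf
      obtain ⟨y, rfl⟩ := hxf
      rcases Sym2.mem_iff.1 hx with rfl | rfl
      · exact Finset.mem_union_left _ (Finset.mem_image_of_mem _ (Finset.mem_univ _))
      · exact Finset.mem_union_right _ (Finset.mem_image_of_mem _ (Finset.mem_univ _))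
    refine (Finset.card_le_card hsub).trans ((Finset.card_union_le _ _).trans ?_)
    have h1 := Finset.card_image_le (s := (Finset.univ : Finset (Fin n))) (f := fun x => s(a, x))
    have h2 := Finset.card_image_le (s := (Finset.univ : Finset (Fin n))) (f := fun x => s(b, x))
    simp only [Finset.card_univ, Fintype.card_fin] at h1 h2
    omega

/-- Absolute row sums of the covariance matrix of the edge indicators. All edges disjoint from `e`
have the same covariance with `e`, and the whole row sums to zero, so the disjoint edges contribute
no more than the at most `2n` edges that touch `e`. -/
lemma cov_row {n k : ℕ} (hn : 2 ≤ n) (hk : k ≤ n) {e : Sym2 (Fin n)} (he : e ∈ completeEdges n) :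
    ∑ f ∈ completeEdges n, |∑ S ∈ kSets n k, cof n k S e * cof n k S f| ≤
      (4 * n : ℝ) * #(kSets n k) := by
  classical
  set R : Sym2 (Fin n) → ℝ := fun f => ∑ S ∈ kSets n k, cof n k S e * cof n k S f with hR
  set T := (completeEdges n).filter (fun f => ¬ Disjoint e.toFinset f.toFinset) with hT
  set U := (completeEdges n).filter (fun f => Disjoint e.toFinset f.toFinset) with hU
  have split : ∀ g : Sym2 (Fin n) → ℝ, ∑ f ∈ completeEdges n, g f = ∑ f ∈ U, g f + ∑ f ∈ T, g f :=
    fun g => (Finset.sum_filter_add_sum_filter_not _ _ _).symm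
  have h0 : ∑ f ∈ completeEdges n, R f = 0 := by
    simp only [hR]
    rw [Finset.sum_comm]
    refine Finset.sum_eq_zero fun S hS => ?_
    rw [← Finset.mul_sum, sum_cof hn hS, mul_zero]
  have hTb : ∑ f ∈ T, |R f| ≤ (2 * n : ℝ) * #(kSets n k) := by
    have h1 : ∀ f ∈ T, |R f| ≤ #(kSets n k) := by
      intro f _
      refine (Finset.abs_sum_le_sum_abs _ _).trans ?_
      refine (Finset.sum_le_card_nsmul _ _ 1 fun S _ => ?_).trans (by simp)
      rw [abs_mul]
      exact mul_le_one₀ (abs_cof_le hn hk _ _) (abs_nonneg _) (abs_cof_le hn hk _ _)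
    refine (Finset.sum_le_card_nsmul _ _ _ h1).trans ?_
    rw [nsmul_eq_mul]
    refine mul_le_mul_of_nonneg_right ?_ (Nat.cast_nonneg _)
    exact_mod_cast card_touching (e := e) (completeEdges n)
  have hconst : ∃ c : ℝ, ∀ f ∈ U, R f = c := by
    have key : ∀ f ∈ U, R f = ((if 4 ≤ k then (n - 4).choose (k - 4) else 0 : ℕ) : ℝ)
        - Kr k / Nr n * ∑ S ∈ kSets n k, ind S e := by
      intro f hf
      obtain ⟨hf1, hf2⟩ := Finset.mem_filter.1 hf
      have h2 := sum_cof_kSets (k := k) hn hf1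
      have h3 : R f = ∑ S ∈ kSets n k, (ind S e * ind S f) -
          Kr k / Nr n * (∑ S ∈ kSets n k, ind S e) - Kr k / Nr n *
            ∑ S ∈ kSets n k, cof n k S f := by
        simp only [hR, Finset.mul_sum, ← Finset.sum_sub_distrib]
        refine Finset.sum_congr rfl fun S _ => ?_
        simp only [cof]; ring
      rw [h3, h2, mul_zero, sub_zero]
      congr 1
      simp only [ind_mul_ind]
      rw [Finset.sum_boole, card_supersets, Finset.card_union_of_disjoint hf2,
        Sym2.card_toFinset_of_not_isDiag _ (mem_completeEdges.1 he),
        Sym2.card_toFinset_of_not_isDiag _ (mem_completeEdges.1 hf1)]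
    exact ⟨_, key⟩
  obtain ⟨c, hc⟩ := hconst
  have hUb : ∑ f ∈ U, |R f| = |∑ f ∈ U, R f| := by
    rw [Finset.sum_congr rfl fun f hf => by rw [hc f hf], Finset.sum_congr rfl hc]
    simp [abs_mul]
  have hU2 : |∑ f ∈ U, R f| ≤ ∑ f ∈ T, |R f| := by
    have : ∑ f ∈ U, R f = - ∑ f ∈ T, R f := by
      have := split R
      linarith
    rw [this, abs_neg]
    exact Finset.abs_sum_le_sum_abs _ _
  rw [split fun f => |R f|, hUb]
  linarith

/-- The Bessel-type inequality for the centred edge indicators of a uniform `k`-set. -/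
lemma bessel_kSets {n k : ℕ} (hn : 2 ≤ n) (hk : k ≤ n) {A : ℝ} (g : Finset (Fin n) → ℝ)
    (hg : ∀ S, |g S| ≤ A) :
    ∑ e ∈ completeEdges n, (Exu (kSets n k) fun S => g S * cof n k S e) ^ 2 ≤ A ^ 2 * (4 * n) := by
  have hc : 0 < #(kSets n k) := by
    rw [kSets, Finset.card_powersetCard]; exact Nat.choose_pos (by simpa using hk)
  have hc' : (0:ℝ) < #(kSets n k) := by exact_mod_cast hc
  have h := bessel (kSets n k) (completeEdges n) (fun S e => cof n k S e)
    (by positivity) (fun e he => cov_row hn hk he) g (fun S _ => hg S)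
  simp only [Exu, div_pow]
  rw [← Finset.sum_div, div_le_iff₀ (by positivity)]
  exact h

/-! ### The centred edge count and its smoothed distribution function -/

section Exu
variable {ω : Type*} {Ω : Finset ω}

lemma Exu_mono {f g : ω → ℝ} (h : ∀ S ∈ Ω, f S ≤ g S) : Exu Ω f ≤ Exu Ω g :=
  div_le_div_of_nonneg_right (Finset.sum_le_sum h) (Nat.cast_nonneg _)

lemma Exu_sub (f g : ω → ℝ) : Exu Ω (fun S => f S - g S) = Exu Ω f - Exu Ω g := by
  simp [Exu, Finset.sum_sub_distrib, sub_div]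

lemma Exu_const (hΩ : Ω.Nonempty) (c : ℝ) : Exu Ω (fun _ => c) = c := by
  have : (#Ω : ℝ) ≠ 0 := by exact_mod_cast hΩ.card_pos.ne'
  simp [Exu, mul_div_cancel_left₀ c this]

lemma abs_Exu_le (hΩ : Ω.Nonempty) {f : ω → ℝ} {C : ℝ} (h : ∀ S ∈ Ω, |f S| ≤ C) :
    |Exu Ω f| ≤ C := by
  refine abs_le.2 ⟨?_, ?_⟩
  · rw [← Exu_const hΩ (-C)]; exact Exu_mono fun S hS => (abs_le.1 (h S hS)).1
  · refine le_of_le_of_eq (Exu_mono fun S hS => (abs_le.1 (h S hS)).2) (Exu_const hΩ C)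

lemma Pru_eq_Exu (P : ω → Prop) [DecidablePred P] :
    Pru Ω P = Exu Ω (fun S => if P S then 1 else 0) := by
  simp only [Pru, Exu]
  rw [Finset.sum_boole]
  congr!

end Exu

/-- The centred statistic `∑ₑ c_e(S) (1[e ∈ G] - p)`. The coefficients sum to zero over all edges,
which is why it equals `e(S) - K·M/N` for graphs with `M` edges. -/
def lin (n k : ℕ) (p : ℝ) (S : Finset (Fin n)) (G : Finset (Sym2 (Fin n))) : ℝ :=
  ∑ e ∈ completeEdges n, cof n k S e * ((if e ∈ G then 1 else 0) - p)

/-- The average over uniform `k`-sets `S` of the test function `h` at `μ + lin S G`. -/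
def Fav (n k : ℕ) (p μ : ℝ) (h : ℝ → ℝ) (G : Finset (Sym2 (Fin n))) : ℝ :=
  Exu (kSets n k) fun S => h (μ + lin n k p S G)

lemma lin_insert {n k : ℕ} {p : ℝ} {S : Finset (Fin n)} {G : Finset (Sym2 (Fin n))}
    {e : Sym2 (Fin n)} (he : e ∈ completeEdges n) (heG : e ∉ G) :
    lin n k p S (insert e G) = lin n k p S G + cof n k S e := by
  rw [← sub_eq_iff_eq_add', lin, lin, ← Finset.sum_sub_distrib, Finset.sum_eq_single e]
  · simp [heG]; ring
  · intro f _ hfe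
    simp [Finset.mem_insert, hfe]
  · exact fun h => absurd he h

lemma kSets_nonempty {n k : ℕ} (hk : k ≤ n) : (kSets n k).Nonempty := by
  rw [kSets, Finset.powersetCard_nonempty]; simpa using hk

lemma Fav_mem {n k : ℕ} (hk : k ≤ n) {p μ : ℝ} {h h1 h2 : ℝ → ℝ} {A1 A2 A3 : ℝ}
    (H : Smooth3 h h1 h2 A1 A2 A3) (G : Finset (Sym2 (Fin n))) :
    Fav n k p μ h G ∈ Set.Icc (0:ℝ) 1 := by
  have hΩ := kSets_nonempty hk
  refine ⟨?_, ?_⟩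
  · rw [← Exu_const hΩ 0]; exact Exu_mono fun S _ => (H.range _).1
  · exact le_of_le_of_eq (Exu_mono fun S _ => (H.range _).2) (Exu_const hΩ 1)

/-- The discrete derivative of `Fav` in direction `e` is an inner product with the centred indicator
of `e`, up to a second-order error. -/
lemma Fav_diff {n k : ℕ} (hn : 2 ≤ n) (hk : k ≤ n) {p μ : ℝ} {h h1 h2 : ℝ → ℝ} {A1 A2 A3 : ℝ}
    (H : Smooth3 h h1 h2 A1 A2 A3) (hA2 : 0 ≤ A2) (G : Finset (Sym2 (Fin n)))
    {e : Sym2 (Fin n)} (he : e ∈ completeEdges n) :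
    |(Fav n k p μ h (insert e G) - Fav n k p μ h (G.erase e)) -
      Exu (kSets n k) (fun S => h1 (μ + lin n k p S G) * cof n k S e)| ≤ A2 := by
  rw [Fav, Fav, ← Exu_sub, ← Exu_sub]
  refine abs_Exu_le (kSets_nonempty hk) fun S _ => ?_
  have hc := abs_cof_le (k := k) hn hk S e
  have hc2 : cof n k S e ^ 2 ≤ 1 := (sq_le_one_iff_abs_le_one _).2 hc
  have hb : A2 * cof n k S e ^ 2 ≤ A2 := by nlinarith
  by_cases heG : e ∈ G
  · have e1 : lin n k p S G = lin n k p S (G.erase e) + cof n k S e := by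
      rw [← lin_insert he (Finset.notMem_erase e G), Finset.insert_erase heG]
    rw [Finset.insert_eq_of_mem heG]
    have := H.t1 (μ + lin n k p S G) (-cof n k S e)
    rw [show μ + lin n k p S G + -cof n k S e = μ + lin n k p S (G.erase e) by rw [e1]; ring,
      neg_sq] at this
    rw [← abs_neg]
    refine le_trans (le_of_eq (congrArg _ ?_)) (this.trans hb)
    ring
  · rw [Finset.erase_eq_of_notMem heG, lin_insert he heG, ← add_assoc]
    exact (H.t1 _ _).trans hb

/-- Squared discrete gradient of `Fav`. By the Bessel inequality the main term is of order
`n A1²`, instead of the trivial `n² A1²`. -/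
lemma Fav_grad {n k : ℕ} (hn : 2 ≤ n) (hk : k ≤ n) {p μ : ℝ} {h h1 h2 : ℝ → ℝ} {A1 A2 A3 : ℝ}
    (H : Smooth3 h h1 h2 A1 A2 A3) (hA2 : 0 ≤ A2) (G : Finset (Sym2 (Fin n))) :
    ∑ e ∈ completeEdges n, (Fav n k p μ h (insert e G) - Fav n k p μ h (G.erase e)) ^ 2 ≤
      8 * n * A1 ^ 2 + n ^ 2 * A2 ^ 2 := by
  have hB := bessel_kSets hn hk (fun S => h1 (μ + lin n k p S G)) (fun S => H.b1 _)
  have h1 : ∀ e ∈ completeEdges n,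
      (Fav n k p μ h (insert e G) - Fav n k p μ h (G.erase e)) ^ 2 ≤
      2 * (Exu (kSets n k) (fun S => h1 (μ + lin n k p S G) * cof n k S e)) ^ 2 + 2 * A2 ^ 2 := by
    intro e he
    have hd := Fav_diff (p := p) (μ := μ) hn hk H hA2 G he
    set D := Fav n k p μ h (insert e G) - Fav n k p μ h (G.erase e)
    set y := Exu (kSets n k) (fun S => h1 (μ + lin n k p S G) * cof n k S e)
    have := sq_le_sq' (abs_le.1 hd).1 (abs_le.1 hd).2
    nlinarith [sq_nonneg (D - 2 * y)]
  refine (Finset.sum_le_sum h1).trans ?_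
  rw [Finset.sum_add_distrib, ← Finset.mul_sum, Finset.sum_const, card_completeEdges, nsmul_eq_mul,
    cast_choose_two]
  have hN : 2 * Nr n ≤ (n:ℝ) ^ 2 := by
    rw [Nr]; nlinarith [(Nat.cast_nonneg n : (0:ℝ) ≤ n)]
  nlinarith [mul_le_mul_of_nonneg_right hN (sq_nonneg A2)]

lemma sum_cof_sq {n k : ℕ} (hn : 2 ≤ n) {S : Finset (Fin n)} (hS : S ∈ kSets n k) :
    ∑ e ∈ completeEdges n, cof n k S e ^ 2 = Kr k * (Nr n - Kr k) / Nr n := by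
  have hk : #S = k := (Finset.mem_powersetCard.1 hS).2
  have h1 : ∀ e, cof n k S e ^ 2 = (1 - Kr k / Nr n) * ind S e - Kr k / Nr n * cof n k S e := by
    intro e
    have : ind S e ^ 2 = ind S e := by rw [ind]; split_ifs <;> norm_num
    simp only [cof]
    linear_combination this
  simp only [h1]
  rw [Finset.sum_sub_distrib, ← Finset.mul_sum, ← Finset.mul_sum, sum_cof hn hS, sum_ind, hk]
  have := (Nr_pos hn).ne'
  field_simp
  ring

/-- The mean of `Fav` over `G(n,p)`: the averages over `S` and `G` are exchanged, and the Lindeberg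
estimate is used for each fixed `S`. -/
lemma bE_Fav {n k : ℕ} (hn : 2 ≤ n) (hk : k ≤ n) {p μ : ℝ} (hp0 : 0 ≤ p) (hp1 : p ≤ 1)
    {h h1 h2 : ℝ → ℝ} {A1 A2 A3 : ℝ}
    (H : Smooth3 h h1 h2 A1 A2 A3) (hA3 : 0 ≤ A3) :
    |bE p (completeEdges n) (Fav n k p μ h) -
      ∫ y, h (μ + y) ∂(gaussianReal 0 (p * (1 - p) * (Kr k * (Nr n - Kr k) / Nr n)).toNNReal)| ≤
      n ^ 2 * (A3 * (1 + m3)) := by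
  have hΩ := kSets_nonempty hk
  set I := ∫ y, h (μ + y) ∂(gaussianReal 0 (p * (1 - p) * (Kr k * (Nr n - Kr k) / Nr n)).toNNReal)
  have e1 : bE p (completeEdges n) (Fav n k p μ h) =
      Exu (kSets n k) fun S => bE p (completeEdges n) fun G => h (μ + lin n k p S G) := by
    unfold Fav
    simp only [Exu]
    rw [← bE_sum, div_eq_inv_mul, ← bE_const_mul]
    simp only [div_eq_inv_mul]
  rw [e1, ← Exu_const hΩ I, ← Exu_sub]
  refine abs_Exu_le hΩ fun S hS => ?_
  have := lindeberg H hA3 hp0 hp1 (c := cof n k S) (fun e => abs_cof_le hn hk S e)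
    (completeEdges n) μ
  rw [sum_cof_sq hn hS] at this
  refine this.trans (mul_le_mul_of_nonneg_right ?_ (mul_nonneg hA3 (by linarith [m3_nonneg])))
  rw [card_completeEdges, cast_choose_two, Nr]
  nlinarith [(Nat.cast_nonneg n : (0:ℝ) ≤ n)]

/-- The exact variance `p (1 - p) K (N - K) / N` of `lin S` over `G(n,p)` is below `λ n²` by at most
`2n`. -/
lemma var_compare {n M k : ℕ} (hn : 2 ≤ n) (hk : k ≤ n) {p : ℝ} (hp : p = M / Nr n)
    (hp0 : 0 ≤ p) (hp1 : p ≤ 1) :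
    p * (1 - p) * (Kr k * (Nr n - Kr k) / Nr n) ≤ lamP n M k * (n:ℝ) ^ 2 ∧
    lamP n M k * (n:ℝ) ^ 2 - p * (1 - p) * (Kr k * (Nr n - Kr k) / Nr n) ≤ 2 * n ∧
    0 ≤ p * (1 - p) * (Kr k * (Nr n - Kr k) / Nr n) := by
  have hN := Nr_pos hn
  have hn' : (2:ℝ) ≤ n := by exact_mod_cast hn
  have hk' : (k:ℝ) ≤ n := by exact_mod_cast hk
  have hk0 : (0:ℝ) ≤ k := Nat.cast_nonneg k
  have hn1 : (0:ℝ) < (n:ℝ) - 1 := by linarith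
  have hq : 0 ≤ p * (1 - p) := mul_nonneg hp0 (by linarith)
  have hq1 : p * (1 - p) ≤ 1 := by nlinarith
  have hKr : Kr k = (k.choose 2 : ℝ) := (cast_choose_two k).symm
  have hK0 : 0 ≤ Kr k := by rw [hKr]; positivity
  have hKN : Kr k ≤ Nr n := by
    rw [hKr, ← cast_choose_two]
    exact_mod_cast Nat.choose_le_choose 2 hk
  have e1 : lamP n M k * (n:ℝ) ^ 2 = p * (1 - p) * (((n:ℝ)^2 - k^2) * k^2 / (2 * n^2)) := by
    rw [lamP, hp]
    have : (n:ℝ) ≠ 0 := by positivity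
    field_simp
  have e2 : ((n:ℝ)^2 - k^2) * k^2 / (2 * n^2) - Kr k * (Nr n - Kr k) / Nr n =
      ((n:ℝ) - k) * k / (2 * n) * ((k * (n - k) + n * (n - 1)) / (n * (n - 1))) := by
    rw [Kr, Nr]
    have : (n:ℝ) ≠ 0 := by positivity
    have := hn1.ne'
    field_simp
    ring
  have hnk : (0:ℝ) ≤ n - k := by linarith
  have f0 : 0 ≤ ((n:ℝ) - k) * k / (2 * n) := by positivity
  have f1 : ((n:ℝ) - k) * k / (2 * n) ≤ n / 2 := by
    rw [div_le_div_iff₀ (by positivity) (by norm_num)]; nlinarith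
  have f2 : 0 ≤ ((k:ℝ) * (n - k) + n * (n - 1)) / (n * (n - 1)) := by positivity
  have f3 : ((k:ℝ) * (n - k) + n * (n - 1)) / (n * (n - 1)) ≤ 4 := by
    rw [div_le_iff₀ (by positivity)]
    nlinarith [mul_nonneg hk0 hk0, mul_le_mul_of_nonneg_left hk' hnk]
  have g0 : 0 ≤ ((n:ℝ) - k) * k / (2 * n) * ((k * (n - k) + n * (n - 1)) / (n * (n - 1))) :=
    mul_nonneg f0 f2
  have g1 : ((n:ℝ) - k) * k / (2 * n) * ((k * (n - k) + n * (n - 1)) / (n * (n - 1))) ≤ n / 2 * 4 :=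
    mul_le_mul f1 f3 f2 (by positivity)
  rw [← e2] at g0 g1
  rw [e1]
  refine ⟨mul_le_mul_of_nonneg_left (by linarith) hq, ?_, ?_⟩
  · rw [← mul_sub]
    nlinarith
  · exact mul_nonneg hq (div_nonneg (mul_nonneg hK0 (by linarith)) hN.le)

/-- On graphs with exactly `M` edges, the centred statistic recovers the edge count. -/
lemma lin_eq_edgesIn {n M k : ℕ} (hn : 2 ≤ n) {S : Finset (Fin n)} (hS : S ∈ kSets n k)
    {G : Finset (Sym2 (Fin n))} (hG : G ⊆ completeEdges n) (hM : #G = M) (p : ℝ) :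
    muP n M k + lin n k p S G = edgesIn G S := by
  classical
  have h1 : lin n k p S G = ∑ e ∈ G, cof n k S e := by
    rw [lin]
    simp only [mul_sub, Finset.sum_sub_distrib, ← Finset.sum_mul, sum_cof hn hS, zero_mul, sub_zero,
      mul_ite, mul_one, mul_zero]
    rw [Finset.sum_ite_mem, Finset.inter_eq_right.2 hG]
  have h2 : ∑ e ∈ G, ind S e = edgesIn G S := by
    simp only [ind, edgesIn]
    rw [Finset.sum_boole]
    simp only [toFinset_subset_iff]
  rw [h1]
  simp only [cof, Finset.sum_sub_distrib, h2, Finset.sum_const, hM, nsmul_eq_mul, muP]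
  ring

lemma edgesIn_le {n : ℕ} {S : Finset (Fin n)} {G : Finset (Sym2 (Fin n))}
    (hG : G ⊆ completeEdges n) : edgesIn G S ≤ n.choose 2 := by
  classical
  rw [← card_completeEdges]
  exact (Finset.card_le_card (Finset.filter_subset _ _)).trans (Finset.card_le_card hG)

/-! ### From smooth steps to intervals -/

lemma gauss_Icc_le (μ : ℝ) {v : NNReal} (hv : v ≠ 0) {a b : ℝ} (hab : a ≤ b) :
    (gaussianReal μ v).real (Set.Icc a b) ≤ (b - a) * (√(2 * Real.pi * v))⁻¹ := by
  have h1 : gaussianReal μ v (Set.Icc a b) ≤ ENNReal.ofReal ((b - a) * (√(2 * Real.pi * v))⁻¹) := by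
    rw [gaussianReal_apply μ hv]
    calc ∫⁻ x in Set.Icc a b, gaussianPDF μ v x
        ≤ ∫⁻ x in Set.Icc a b, ENNReal.ofReal ((√(2 * Real.pi * v))⁻¹) := by
          refine lintegral_mono fun x => ENNReal.ofReal_le_ofReal ?_
          rw [gaussianPDFReal]
          refine mul_le_of_le_one_right (by positivity) (Real.exp_le_one_iff.2 ?_)
          have : (0:ℝ) ≤ (x - μ) ^ 2 / (2 * v) := by positivity
          rw [neg_div]; linarith
      _ = ENNReal.ofReal ((b - a) * (√(2 * Real.pi * v))⁻¹) := by
          rw [lintegral_const, Measure.restrict_apply_univ, Real.volume_Icc, mul_comm,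
            ENNReal.ofReal_mul (by linarith)]
  rw [Measure.real]
  exact ENNReal.toReal_le_of_le_ofReal
    (mul_nonneg (by linarith) (by positivity)) h1

lemma gauss_shift (h : ℝ → ℝ) (hc : Continuous h) (μ : ℝ) (v : NNReal) :
    ∫ y, h (μ + y) ∂(gaussianReal 0 v) = ∫ w, h w ∂(gaussianReal μ v) := by
  have := gaussianReal_map_const_add (μ := 0) (v := v) μ
  rw [zero_add] at this
  rw [← this, integral_map (by fun_prop) hc.aestronglyMeasurable]

section Grid
variable {ω : Type*} {Ω : Finset ω}

lemma Pru_mono {P Q : ω → Prop} (h : ∀ S ∈ Ω, P S → Q S) : Pru Ω P ≤ Pru Ω Q := by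
  classical
  rw [Pru_eq_Exu, Pru_eq_Exu]
  refine Exu_mono fun S hS => ?_
  by_cases hP : P S
  · simp [hP, h S hS hP]
  · by_cases hQ : Q S <;> simp [hP, hQ]

/-- Two smooth steps, one starting at `j` and one ending at `j`, sandwich the indicator of
`(-∞, j]`; their Gaussian integrals exceed the Gaussian mass by at most that of an interval of
length `L`. -/
lemma grid_of_smooth {h : ℝ → ℝ} (hc : Continuous h) (hr : ∀ x, h x ∈ Set.Icc (0:ℝ) 1)
    (h0 : ∀ x ≤ 0, h x = 1) (h1 : ∀ x, 1 ≤ x → h x = 0) {L : ℝ} (hL : 0 < L)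
    {γ : Measure ℝ} [IsProbabilityMeasure γ] {ρ β : ℝ}
    (hγ : ∀ a b : ℝ, a ≤ b → γ.real (Set.Icc a b) ≤ (b - a) * ρ) (X : ω → ℝ) (j : ℝ)
    (hz : ∀ z, z = j ∨ z = j - L →
      |Exu Ω (fun S => h ((X S - z) / L)) - ∫ w, h ((w - z) / L) ∂γ| ≤ β) :
    |Pru Ω (fun S => X S ≤ j) - γ.real (Set.Iic j)| ≤ β + L * ρ := by
  classical
  have hintegr : ∀ z, Integrable (fun w => h ((w - z) / L)) γ := fun z =>
    (integrable_const (1:ℝ)).mono' (by fun_prop : Continuous _).aestronglyMeasurable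
      (.of_forall fun w => by
        rw [Real.norm_eq_abs, abs_of_nonneg (hr _).1]; exact (hr _).2)
  have hind : ∀ s : Set ℝ, MeasurableSet s → ∫ w, s.indicator (fun _ => (1:ℝ)) w ∂γ = γ.real s :=
    fun s hs => by rw [integral_indicator hs]; simp
  have hindi : ∀ s : Set ℝ, MeasurableSet s → Integrable (s.indicator (fun _ => (1:ℝ))) γ :=
    fun s hs => (integrable_const _).indicator hs
  have hpos : ∀ z x : ℝ, x ≤ z → h ((x - z) / L) = 1 := fun z x hx =>
    h0 _ (div_nonpos_of_nonpos_of_nonneg (by linarith) hL.le)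
  have hneg : ∀ z x : ℝ, z + L ≤ x → h ((x - z) / L) = 0 := fun z x hx =>
    h1 _ ((one_le_div hL).2 (by linarith))
  have i1 : ∫ w, h ((w - j) / L) ∂γ ≤ γ.real (Set.Iic j) + L * ρ := by
    have e : ∫ w, h ((w - j) / L) ∂γ ≤ ∫ w, ((Set.Iic j).indicator (fun _ => (1:ℝ)) w
        + (Set.Icc j (j + L)).indicator (fun _ => (1:ℝ)) w) ∂γ := by
      refine integral_mono (hintegr j) ((hindi _ measurableSet_Iic).add (hindi _ measurableSet_Icc)) ?_
      intro w
      rcases le_total w j with hw | hw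
      · have : (0:ℝ) ≤ (Set.Icc j (j + L)).indicator (fun _ => (1:ℝ)) w :=
          Set.indicator_nonneg (fun _ _ => zero_le_one) _
        have e2 : (Set.Iic j).indicator (fun _ => (1:ℝ)) w = 1 := by simp [hw]
        have := (hr ((w - j) / L)).2
        simp only [e2]; linarith
      · have p1 : (0:ℝ) ≤ (Set.Iic j).indicator (fun _ => (1:ℝ)) w :=
          Set.indicator_nonneg (fun _ _ => zero_le_one) _
        rcases le_total w (j + L) with hw' | hw'
        · have e2 : (Set.Icc j (j + L)).indicator (fun _ => (1:ℝ)) w = 1 := by simp [hw, hw']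
          have := (hr ((w - j) / L)).2
          simp only [e2]; linarith
        · have p2 : (0:ℝ) ≤ (Set.Icc j (j + L)).indicator (fun _ => (1:ℝ)) w :=
            Set.indicator_nonneg (fun _ _ => zero_le_one) _
          simp only [hneg j w hw']; linarith
    rw [integral_add (hindi _ measurableSet_Iic) (hindi _ measurableSet_Icc),
      hind _ measurableSet_Iic, hind _ measurableSet_Icc] at e
    have := hγ j (j + L) (by linarith)
    rw [add_sub_cancel_left] at this
    linarith
  have i2 : γ.real (Set.Iic j) - L * ρ ≤ ∫ w, h ((w - (j - L)) / L) ∂γ := by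
    have e : ∫ w, ((Set.Iic j).indicator (fun _ => (1:ℝ)) w
        - (Set.Icc (j - L) j).indicator (fun _ => (1:ℝ)) w) ∂γ
        ≤ ∫ w, h ((w - (j - L)) / L) ∂γ := by
      refine integral_mono ((hindi _ measurableSet_Iic).sub (hindi _ measurableSet_Icc)) (hintegr _) ?_
      intro w
      have q := (hr ((w - (j - L)) / L)).1
      have p2 : (0:ℝ) ≤ (Set.Icc (j - L) j).indicator (fun _ => (1:ℝ)) w :=
            Set.indicator_nonneg (fun _ _ => zero_le_one) _
      rcases lt_or_ge j w with hw | hw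
      · have e2 : (Set.Iic j).indicator (fun _ => (1:ℝ)) w = 0 := by simp [hw]
        simp only [e2]; linarith
      · have e2 : (Set.Iic j).indicator (fun _ => (1:ℝ)) w = 1 := by simp [hw]
        rcases le_total w (j - L) with hw' | hw'
        · simp only [e2, hpos _ _ hw']; linarith
        · have e3 : (Set.Icc (j - L) j).indicator (fun _ => (1:ℝ)) w = 1 := by simp [hw, hw']
          simp only [e2, e3]; linarith
    rw [integral_sub (hindi _ measurableSet_Iic) (hindi _ measurableSet_Icc),
      hind _ measurableSet_Iic, hind _ measurableSet_Icc] at e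
    have := hγ (j - L) j (by linarith)
    rw [sub_sub_cancel] at this
    linarith
  have s1 : Pru Ω (fun S => X S ≤ j) ≤ Exu Ω (fun S => h ((X S - j) / L)) := by
    rw [Pru_eq_Exu]
    refine Exu_mono fun S _ => ?_
    split_ifs with hx
    · rw [hpos _ _ hx]
    · exact (hr _).1
  have s2 : Exu Ω (fun S => h ((X S - (j - L)) / L)) ≤ Pru Ω (fun S => X S ≤ j) := by
    rw [Pru_eq_Exu]
    refine Exu_mono fun S _ => ?_
    split_ifs with hx
    · exact (hr _).2
    · rw [hneg _ _ (by push Not at hx; linarith)]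
  have b1 := abs_le.1 (hz j (.inl rfl))
  have b2 := abs_le.1 (hz (j - L) (.inr rfl))
  refine abs_le.2 ⟨?_, ?_⟩ <;> linarith [b1.1, b1.2, b2.1, b2.2]

/-- For an integer statistic, closeness of the distribution functions at the integers of the range
controls all intervals, at the cost of the Gaussian mass of one unit interval. -/
lemma interval_of_grid (hΩ : Ω.Nonempty) {γ : Measure ℝ} [IsProbabilityMeasure γ] {ρ β : ℝ}
    (hγ : ∀ a b : ℝ, a ≤ b → γ.real (Set.Icc a b) ≤ (b - a) * ρ) {N : ℕ} (X : ω → ℕ)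
    (hX : ∀ S ∈ Ω, X S ≤ N)
    (hg : ∀ j : ℤ, -1 ≤ j → j ≤ N →
      |Pru Ω (fun S => (X S : ℝ) ≤ j) - γ.real (Set.Iic (j:ℝ))| ≤ β)
    {z₀ z₁ : ℝ} (hz : z₀ ≤ z₁) :
    |Pru Ω (fun S => (X S : ℝ) ∈ Set.Icc z₀ z₁) - γ.real (Set.Icc z₀ z₁)| ≤ 2 * β + ρ := by
  classical
  have hneg : ∀ j : ℤ, j ≤ -1 → Pru Ω (fun S => (X S : ℝ) ≤ j) = 0 := by
    intro j hj
    have hj' : (j:ℝ) ≤ -1 := by exact_mod_cast hj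
    have : ∀ S, ¬ ((X S : ℝ) ≤ j) := fun S hS => by
      have : (0:ℝ) ≤ X S := Nat.cast_nonneg _
      linarith
    rw [Pru_eq_Exu]; simp [this, Exu]
  have hbig : ∀ j : ℤ, (N:ℤ) ≤ j → Pru Ω (fun S => (X S : ℝ) ≤ j) = 1 := by
    intro j hj
    have hj' : (N:ℝ) ≤ j := by exact_mod_cast hj
    rw [Pru_eq_Exu, Exu]
    rw [Finset.sum_congr rfl (g := fun _ => (1:ℝ)) (fun S hS => if_pos
      ((Nat.cast_le.2 (hX S hS)).trans hj'))]
    exact Exu_const hΩ 1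
  have hmono : ∀ a b : ℝ, a ≤ b → γ.real (Set.Iic a) ≤ γ.real (Set.Iic b) := fun a b hab =>
    measureReal_mono (Set.Iic_subset_Iic.2 hab)
  have hall : ∀ j : ℤ, |Pru Ω (fun S => (X S : ℝ) ≤ j) - γ.real (Set.Iic (j:ℝ))| ≤ β := by
    intro j
    rcases le_total (-1) j with h1 | h1
    · rcases le_total j N with h2 | h2
      · exact hg j h1 h2
      · have h3 := abs_le.1 (hg N (by omega) le_rfl)
        rw [hbig N le_rfl] at h3
        rw [hbig j h2]
        have h4 := hmono (((N:ℤ):ℝ)) j (by exact_mod_cast h2)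
        have h5 : γ.real (Set.Iic (j:ℝ)) ≤ 1 := measureReal_le_one
        rw [abs_of_nonneg (by linarith)]
        linarith [h3.2]
    · have h3 := abs_le.1 (hg (-1) le_rfl (by omega))
      rw [hneg _ le_rfl] at h3
      rw [hneg j h1]
      have h4 := hmono j ((-1:ℤ):ℝ) (by exact_mod_cast h1)
      have h5 : 0 ≤ γ.real (Set.Iic (j:ℝ)) := measureReal_nonneg
      rw [abs_of_nonpos (by linarith)]
      linarith [h3.1]
  set a : ℤ := ⌈z₀⌉ - 1 with ha
  set b : ℤ := ⌊z₁⌋ with hb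
  have ha1 : (a:ℝ) < z₀ := by have := Int.ceil_lt_add_one z₀; rw [ha]; push_cast; linarith
  have ha2 : z₀ ≤ a + 1 := by have := Int.le_ceil z₀; rw [ha]; push_cast; linarith
  have hb1 : (b:ℝ) ≤ z₁ := Int.floor_le z₁
  have hb2 : z₁ < b + 1 := Int.lt_floor_add_one z₁
  have hab : a ≤ b := by
    have : (a:ℝ) < b + 1 := by linarith
    have : a < b + 1 := by exact_mod_cast this
    omega
  have habr : (a:ℝ) ≤ b := by exact_mod_cast hab
  have hP : Pru Ω (fun S => (X S : ℝ) ∈ Set.Icc z₀ z₁)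
      = Pru Ω (fun S => (X S : ℝ) ≤ b) - Pru Ω (fun S => (X S : ℝ) ≤ a) := by
    rw [Pru_eq_Exu, Pru_eq_Exu, Pru_eq_Exu, ← Exu_sub]
    congr 1
    funext S
    have k1 : (X S : ℝ) ≤ b ↔ (X S : ℝ) ≤ z₁ := by
      refine ⟨fun h => h.trans hb1, fun h => ?_⟩
      have : ((X S : ℤ)) ≤ b := Int.le_floor.2 (by exact_mod_cast h)
      exact_mod_cast this
    have k2 : (X S : ℝ) ≤ a ↔ ¬ z₀ ≤ (X S : ℝ) := by
      refine ⟨fun h => by linarith, fun h => ?_⟩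
      push Not at h
      have h' : ((X S : ℤ):ℝ) < z₀ := by exact_mod_cast h
      have : (X S : ℤ) < ⌈z₀⌉ := Int.lt_ceil.2 h'
      have : (X S : ℤ) ≤ a := by omega
      exact_mod_cast this
    simp only [Set.mem_Icc, k1, k2]
    by_cases c1 : z₀ ≤ (X S : ℝ) <;> by_cases c2 : (X S : ℝ) ≤ z₁ <;> simp [c1, c2]
    linarith
  have g1 : γ.real (Set.Icc z₀ z₁) ≤ γ.real (Set.Iic (b:ℝ)) - γ.real (Set.Iic (a:ℝ)) + ρ := by
    have d : Disjoint (Set.Iic (a:ℝ)) (Set.Icc z₀ z₁) :=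
      Set.disjoint_left.2 fun x hx hx' => by
        have := hx'.1; have := Set.mem_Iic.1 hx; linarith
    have m1 : γ.real (Set.Iic (a:ℝ) ∪ Set.Icc z₀ z₁)
        ≤ γ.real (Set.Iic (b:ℝ) ∪ Set.Icc (b:ℝ) (b + 1)) := by
      refine measureReal_mono ?_
      rintro x (hx | hx)
      · exact .inl (le_trans hx habr)
      · rcases le_total x b with h | h
        · exact .inl h
        · exact .inr ⟨h, by linarith [hx.2]⟩
    rw [measureReal_union d measurableSet_Icc] at m1
    have m2 := measureReal_union_le (μ := γ) (Set.Iic (b:ℝ)) (Set.Icc (b:ℝ) (b + 1))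
    have m3 := hγ b (b + 1) (by linarith)
    rw [add_sub_cancel_left, one_mul] at m3
    linarith
  have g2 : γ.real (Set.Iic (b:ℝ)) - γ.real (Set.Iic (a:ℝ)) - ρ ≤ γ.real (Set.Icc z₀ z₁) := by
    have m1 : γ.real (Set.Iic (b:ℝ))
        ≤ γ.real ((Set.Iic (a:ℝ) ∪ Set.Icc (a:ℝ) (a + 1)) ∪ Set.Icc z₀ z₁) := by
      refine measureReal_mono ?_
      intro x hx
      have hx : x ≤ b := hx
      rcases le_total x a with h | h
      · exact .inl (.inl h)
      · rcases le_total x z₀ with h' | h'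
        · exact .inl (.inr ⟨h, by linarith⟩)
        · exact .inr ⟨h', by linarith⟩
    have m2 := measureReal_union_le (μ := γ) (Set.Iic (a:ℝ) ∪ Set.Icc (a:ℝ) (a + 1)) (Set.Icc z₀ z₁)
    have m3 := measureReal_union_le (μ := γ) (Set.Iic (a:ℝ)) (Set.Icc (a:ℝ) (a + 1))
    have m4 := hγ a (a + 1) (by linarith)
    rw [add_sub_cancel_left, one_mul] at m4
    linarith
  have ba := abs_le.1 (hall a)
  have bb := abs_le.1 (hall b)
  rw [hP]
  refine abs_le.2 ⟨?_, ?_⟩ <;> linarith [ba.1, ba.2, bb.1, bb.2]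

end Grid

/-! ### Union bound and choice of parameters -/

/-- The Lindeberg estimate with the target variance `λ n²` in place of the exact variance of the
linear statistic. -/
lemma bE_Fav_target {n M k : ℕ} (hn : 2 ≤ n) (hk : k ≤ n) {p : ℝ} (hp : p = (M:ℝ) / Nr n)
    (hp0 : 0 ≤ p) (hp1 : p ≤ 1) (μ : ℝ) {h h1 h2 : ℝ → ℝ} {A1 A2 A3 : ℝ}
    (H : Smooth3 h h1 h2 A1 A2 A3) (hA2 : 0 ≤ A2) (hA3 : 0 ≤ A3) :
    |bE p (completeEdges n) (Fav n k p μ h)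
      - ∫ w, h w ∂(gaussianReal μ (lamP n M k * (n:ℝ) ^ 2).toNNReal)|
      ≤ (n:ℝ) ^ 2 * (A3 * (1 + m3)) + A2 * (2 * n) := by
  obtain ⟨c1, c2, c3⟩ := var_compare (M := M) hn hk hp hp0 hp1
  have e1 := abs_le.1 (bE_Fav hn hk (μ := μ) hp0 hp1 H hA3)
  have e2 := H.gauss_var_compare (Real.toNNReal_le_toNNReal c1) μ
  rw [Real.coe_toNNReal _ c3, Real.coe_toNNReal _ (c3.trans c1)] at e2
  have e3 := abs_le.1 (e2.trans (mul_le_mul_of_nonneg_left c2 hA2))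
  rw [← gauss_shift h H.cont]
  refine abs_le.2 ⟨?_, ?_⟩ <;> linarith [e1.1, e1.2, e3.1, e3.2]

/-- For the thresholds in a finite set, the smoothed statistics are simultaneously within `t` of
their means over the binomial random graph, outside an event of small uniform probability. -/
lemma bad_prob {n M k : ℕ} (hn : 2 ≤ n) (hk : k ≤ n) (hM : M ≤ n.choose 2) {p μ : ℝ}
    (hp : p = (M:ℝ) / Nr n) (hp0 : 0 ≤ p) (hp1 : p ≤ 1)
    {h h1 h2 : ℝ → ℝ} {A : ℝ} (hA : 0 < A) (H : Smooth3 h h1 h2 A A A) {L : ℝ} (hL : 0 < L)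
    {σ : ℝ} (hσ : 0 < σ) (hσ2 : 8 * n * (A / L) ^ 2 + (n:ℝ) ^ 2 * (A / L ^ 2) ^ 2 ≤ σ ^ 2)
    (t : ℝ) (Z : Finset ℝ) :
    Pru (graphsM n M) (fun G => ∃ z ∈ Z, t < |Fav n k p μ (fun x => h ((x - z) / L)) G
        - bE p (completeEdges n) (Fav n k p μ (fun x => h ((x - z) / L)))|)
      ≤ (Nr n + 1) * (#Z * (2 * Real.exp (2 - t / (2 * σ)))) := by
  classical
  set B : Finset (Sym2 (Fin n)) → Prop := fun G =>
    ∃ z ∈ Z, t < |Fav n k p μ (fun x => h ((x - z) / L)) G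
        - bE p (completeEdges n) (Fav n k p μ (fun x => h ((x - z) / L)))| with hB
  have hE : (#(completeEdges n) : ℝ) = Nr n := by rw [card_completeEdges, cast_choose_two]
  have hpos : 0 < #(completeEdges n) := by
    rw [card_completeEdges]; exact Nat.choose_pos hn
  have hgr : graphsM n M = (completeEdges n).powersetCard M := by
    ext G; simp [graphsM, Finset.mem_powersetCard]
  have h1 := transfer (M := M) (completeEdges n) hpos (by rwa [card_completeEdges]) B
  rw [hE, ← hp] at h1
  have h3 : Pru (graphsM n M) B = (#(((completeEdges n).powersetCard M).filter B) : ℝ)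
      / #((completeEdges n).powersetCard M) := by
    rw [hgr, Pru]
    congr!
  rw [h3]
  have hN : 0 ≤ Nr n := by rw [← hE]; positivity
  refine h1.trans (mul_le_mul_of_nonneg_left ?_ (by linarith))
  calc bE p (completeEdges n) (fun G => if B G then 1 else 0)
      ≤ bE p (completeEdges n) (fun G => ∑ z ∈ Z,
          if t < |Fav n k p μ (fun x => h ((x - z) / L)) G
            - bE p (completeEdges n) (Fav n k p μ (fun x => h ((x - z) / L)))| then 1 else 0) := by
        refine bE_mono hp0 hp1 fun G _ => ?_
        split_ifs with hG
        · obtain ⟨z, hz, hz2⟩ := hG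
          refine le_trans ?_ (Finset.single_le_sum (f := fun z =>
            if t < |Fav n k p μ (fun x => h ((x - z) / L)) G
            - bE p (completeEdges n) (Fav n k p μ (fun x => h ((x - z) / L)))| then (1:ℝ) else 0)
            (fun z _ => by positivity) hz)
          simp only [if_pos hz2]; exact le_rfl
        · exact Finset.sum_nonneg fun z _ => by positivity
    _ = ∑ z ∈ Z, bE p (completeEdges n) (fun G =>
          if t < |Fav n k p μ (fun x => h ((x - z) / L)) G
            - bE p (completeEdges n) (Fav n k p μ (fun x => h ((x - z) / L)))| then 1 else 0) :=
        bE_sum Z _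
    _ ≤ ∑ z ∈ Z, 2 * Real.exp (2 - t / (2 * σ)) := by
        refine Finset.sum_le_sum fun z _ => ?_
        refine bE_concentration hp0 hp1 hσ (fun G _ => ?_) (fun G _ => ?_) t
        · refine le_trans ?_ hσ2
          convert Fav_grad hn hk (H.scale z hL) (by positivity) G
        · exact Fav_mem hk (H.scale z hL) G
    _ = #Z * (2 * Real.exp (2 - t / (2 * σ))) := by rw [Finset.sum_const, nsmul_eq_mul]

/-- The thresholds at which the smoothed distribution functions are compared: the integers
`j ∈ [-1, N]` and their shifts `j - L`. -/
def thresholds (N : ℕ) (L : ℝ) : Finset ℝ :=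
  (Finset.Icc (-1:ℤ) N).image (fun j : ℤ => (j:ℝ)) ∪ (Finset.Icc (-1:ℤ) N).image (fun j : ℤ => (j:ℝ) - L)

lemma card_thresholds (N : ℕ) (L : ℝ) : (#(thresholds N L) : ℝ) ≤ 2 * (N + 2) := by
  have h1 : #(thresholds N L) ≤ (N + 2) + (N + 2) := by
    have hc : #(Finset.Icc (-1:ℤ) N) = N + 2 := by rw [Int.card_Icc]; omega
    refine (Finset.card_union_le _ _).trans ?_
    exact add_le_add (Finset.card_image_le.trans hc.le) (Finset.card_image_le.trans hc.le)
  have : (#(thresholds N L) : ℝ) ≤ (N + 2) + (N + 2) := by exact_mod_cast h1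
  linarith

/-- The non-asymptotic form of the theorem, with the smoothing scale `L` and the deviation `t`
free. -/
lemma prob_lower {n M k : ℕ} (hn : 2 ≤ n) (hk : k ≤ n) (hM : M ≤ n.choose 2) {p : ℝ}
    (hp : p = (M:ℝ) / Nr n) (hp0 : 0 ≤ p) (hp1 : p ≤ 1)
    {h h1 h2 : ℝ → ℝ} {A : ℝ} (hA : 0 < A) (H : Smooth3 h h1 h2 A A A)
    (hs0 : ∀ x ≤ 0, h x = 1) (hs1 : ∀ x, 1 ≤ x → h x = 0) {L : ℝ} (hL : 0 < L)
    {σ : ℝ} (hσ : 0 < σ) (hσ2 : 8 * n * (A / L) ^ 2 + (n:ℝ) ^ 2 * (A / L ^ 2) ^ 2 ≤ σ ^ 2)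
    {t ρ err : ℝ} (hv : 0 < lamP n M k * (n:ℝ) ^ 2)
    (hρ : (√(2 * Real.pi * (lamP n M k * (n:ℝ) ^ 2)))⁻¹ ≤ ρ)
    (herr : 2 * (t + ((n:ℝ) ^ 2 * (A / L ^ 3 * (1 + m3)) + A / L ^ 2 * (2 * n)) + L * ρ) + ρ ≤ err) :
    1 - (Nr n + 1) * (2 * (Nr n + 2) * (2 * Real.exp (2 - t / (2 * σ)))) ≤
      PrGnM n M (fun G => ∀ z₀ z₁ : ℝ, z₀ ≤ z₁ →
          |Pru (kSets n k) (fun S => (edgesIn G S : ℝ) ∈ Set.Icc z₀ z₁) -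
            gaussMeas (muP n M k) (lamP n M k * (n:ℝ) ^ 2) (Set.Icc z₀ z₁)| ≤ err) := by
  classical
  have hgr : graphsM n M = (completeEdges n).powersetCard M := by
    ext G; simp [graphsM, Finset.mem_powersetCard]
  have hne : (graphsM n M).Nonempty := by
    rw [hgr]; exact Finset.powersetCard_nonempty.2 (by rwa [card_completeEdges])
  have hN : 0 ≤ Nr n := by rw [← cast_choose_two]; positivity
  have hbad := bad_prob (μ := muP n M k) hn hk hM hp hp0 hp1 hA H hL hσ hσ2 t
    (thresholds (n.choose 2) L)
  have hcard := card_thresholds (n.choose 2) L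
  rw [cast_choose_two] at hcard
  have hbad2 := hbad.trans (mul_le_mul_of_nonneg_left
    (mul_le_mul_of_nonneg_right hcard (by positivity)) (by linarith))
  set B : Finset (Sym2 (Fin n)) → Prop := fun G => ∃ z ∈ thresholds (n.choose 2) L,
    t < |Fav n k p (muP n M k) (fun x => h ((x - z) / L)) G
      - bE p (completeEdges n) (Fav n k p (muP n M k) (fun x => h ((x - z) / L)))| with hB
  have hcompl : Pru (graphsM n M) (fun G => ¬ B G) = 1 - Pru (graphsM n M) B := by
    have hsub := Exu_sub (Ω := graphsM n M) (fun _ => 1) (fun G => if B G then 1 else 0)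
    rw [Exu_const hne] at hsub
    rw [Pru_eq_Exu, Pru_eq_Exu, ← hsub]
    congr 1
    funext G
    by_cases hG : B G <;> simp [hG]
  rw [PrGnM]
  refine le_trans (by linarith) (hcompl.symm.le.trans (Pru_mono fun G hG hnB => ?_))
  rw [hgr, Finset.mem_powersetCard] at hG
  obtain ⟨hGE, hGM⟩ := hG
  simp only [hB, not_exists, not_and, not_lt] at hnB
  intro z₀ z₁ hz
  set v : NNReal := (lamP n M k * (n:ℝ) ^ 2).toNNReal with hvdef
  have hv0 : v ≠ 0 := (Real.toNNReal_pos.2 hv).ne'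
  have hγ : ∀ a b : ℝ, a ≤ b →
      (gaussianReal (muP n M k) v).real (Set.Icc a b) ≤ (b - a) * ρ := fun a b hab => by
    refine (gauss_Icc_le _ hv0 hab).trans (mul_le_mul_of_nonneg_left ?_ (by linarith))
    rwa [hvdef, Real.coe_toNNReal _ hv.le]
  have hthr : ∀ z ∈ thresholds (n.choose 2) L,
      |Exu (kSets n k) (fun S => h (((edgesIn G S : ℝ) - z) / L))
        - ∫ w, h ((w - z) / L) ∂(gaussianReal (muP n M k) v)|
      ≤ t + ((n:ℝ) ^ 2 * (A / L ^ 3 * (1 + m3)) + A / L ^ 2 * (2 * n)) := by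
    intro z hzm
    have e1 := abs_le.1 (hnB z hzm)
    have e2 := abs_le.1 (bE_Fav_target (M := M) hn hk hp hp0 hp1 (muP n M k) (H.scale z hL)
      (by positivity) (by positivity))
    have e3 : Exu (kSets n k) (fun S => h (((edgesIn G S : ℝ) - z) / L))
        = Fav n k p (muP n M k) (fun x => h ((x - z) / L)) G := by
      rw [Fav, Exu, Exu]
      congr 1
      exact Finset.sum_congr rfl fun S hS => by rw [lin_eq_edgesIn hn hS hGE hGM]
    rw [e3]
    refine abs_le.2 ⟨?_, ?_⟩ <;> linarith [e1.1, e1.2, e2.1, e2.2]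
  have hfin := interval_of_grid (Ω := kSets n k) (kSets_nonempty hk) hγ (N := n.choose 2)
    (fun S => edgesIn G S) (fun S _ => edgesIn_le hGE)
    (fun j hj1 hj2 => grid_of_smooth H.cont H.range hs0 hs1 hL hγ (fun S => (edgesIn G S : ℝ)) j
      (fun z hz => hthr z (by
        have hm : j ∈ Finset.Icc (-1:ℤ) (n.choose 2) := Finset.mem_Icc.2 ⟨hj1, hj2⟩
        rw [thresholds, Finset.mem_union, Finset.mem_image, Finset.mem_image]
        rcases hz with rfl | rfl
        · exact .inl ⟨j, hm, rfl⟩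
        · exact .inr ⟨j, hm, rfl⟩))) hz
  exact hfin.trans herr

lemma lamP_lower {n M k : ℕ} (hn : 2 ≤ n) {δ : ℝ} (hδ : 0 < δ)
    (hM1 : δ ≤ (M : ℝ) / Nr n) (hM2 : (M : ℝ) / Nr n ≤ 1 - δ)
    (hk1 : δ ≤ (k : ℝ) / n) (hk2 : (k : ℝ) / n ≤ 1 - δ) :
    δ ^ 5 / 2 ≤ lamP n M k := by
  have hn0 : (0:ℝ) < n := by positivity
  have hN := Nr_pos hn
  set κ := (k:ℝ) / n with hκ
  set p := (M:ℝ) / Nr n with hp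
  have e : lamP n M k = (1 - κ ^ 2) * κ ^ 2 / 2 * (p * (1 - p)) := by
    rw [lamP, hκ, hp]; field_simp
  rw [e]
  have a1 : δ ≤ 1 - κ ^ 2 := by nlinarith
  have a2 : δ ^ 2 ≤ κ ^ 2 := by gcongr
  have a3 : δ * δ ≤ p * (1 - p) := mul_le_mul hM1 (by linarith) hδ.le (by linarith)
  have a4 : δ * δ ^ 2 ≤ (1 - κ ^ 2) * κ ^ 2 := mul_le_mul a1 a2 (by positivity) (by linarith)
  have a5 : (δ * δ ^ 2 / 2) * (δ * δ) ≤ (1 - κ ^ 2) * κ ^ 2 / 2 * (p * (1 - p)) :=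
    mul_le_mul (by linarith) a3 (by positivity) (by
      have : 0 < δ * δ ^ 2 := by positivity
      linarith)
  calc δ ^ 5 / 2 = (δ * δ ^ 2 / 2) * (δ * δ) := by ring
    _ ≤ _ := a5

/-- The union-bound probability is eventually below `exp (-y)` with `y = n ^ (ε / 4)`. -/
lemma tail_bound {n : ℕ} (hn : 2 ≤ n) {ε A y : ℝ} (hε : 0 < ε) (hA : 0 < A)
    (hy : y = (n:ℝ) ^ (ε / 4)) (hy1 : 1 ≤ y) (hy2 : 6 * A * (5 + 16 / ε) ≤ y) :
    (Nr n + 1) * (2 * (Nr n + 2) * (2 * Real.exp (2 - y ^ 2 / (6 * A)))) ≤ Real.exp (-y) := by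
  have hn' : (2:ℝ) ≤ n := by exact_mod_cast hn
  have hN := Nr_pos hn
  have b1 : Nr n + 1 ≤ (n:ℝ) ^ 2 := by rw [Nr]; nlinarith
  have b2 : Nr n + 2 ≤ (n:ℝ) ^ 2 := by rw [Nr]; nlinarith
  have hlog : Real.log n ≤ 4 / ε * y := by
    have := Real.log_le_rpow_div (x := (n:ℝ)) (by positivity) (ε := ε / 4) (by positivity)
    rw [← hy] at this
    calc Real.log n ≤ y / (ε / 4) := this
      _ = 4 / ε * y := by field_simp
  have hn4 : (n:ℝ) ^ 4 ≤ Real.exp (16 / ε * y) := by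
    rw [← Real.exp_log (show (0:ℝ) < n by linarith), ← Real.exp_nat_mul, Real.exp_le_exp]
    push_cast
    calc 4 * Real.log n ≤ 4 * (4 / ε * y) := by linarith
      _ = 16 / ε * y := by ring
  have h4 : (4:ℝ) ≤ Real.exp 2 := by
    have : (2:ℝ) ≤ Real.exp 1 := by linarith [Real.add_one_le_exp (1:ℝ)]
    have e : Real.exp 2 = Real.exp 1 * Real.exp 1 := by rw [← Real.exp_add]; norm_num
    rw [e]; nlinarith
  have hy3 : (5 + 16 / ε) * y ≤ y ^ 2 / (6 * A) := by
    rw [le_div_iff₀ (by positivity)]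
    nlinarith
  calc (Nr n + 1) * (2 * (Nr n + 2) * (2 * Real.exp (2 - y ^ 2 / (6 * A))))
      ≤ (n:ℝ) ^ 2 * (2 * (n:ℝ) ^ 2 * (2 * Real.exp (2 - y ^ 2 / (6 * A)))) := by gcongr
    _ = 4 * (n:ℝ) ^ 4 * Real.exp (2 - y ^ 2 / (6 * A)) := by ring
    _ ≤ Real.exp 2 * Real.exp (16 / ε * y) * Real.exp (2 - y ^ 2 / (6 * A)) := by gcongr
    _ = Real.exp (2 + 16 / ε * y + (2 - y ^ 2 / (6 * A))) := by rw [Real.exp_add, Real.exp_add]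
    _ ≤ Real.exp (-y) := by
        rw [Real.exp_le_exp]
        nlinarith

/-- Corollary 3.1: interval version of the CLT.
Fix `δ, ε > 0`. There are `η > 0` and `n₀` such that for all `n ≥ n₀` and `M, k` with
`M/N, k/n ∈ [δ, 1-δ]`, with probability at least `1 - exp(-n^η)` over `G_{n,M}`: for all
real `z₀ ≤ z₁`, `|P_S(e(S) ∈ [z₀, z₁]) - P(Z ∈ [z₀, z₁])| ≤ n^(-1/4+ε)` with
`Z ~ N(K·M/N, λ·n²)`. -/
theorem stmt_12 (δ ε : ℝ) (hδ : 0 < δ) (hε : 0 < ε) :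
    ∃ η > (0:ℝ), ∃ n₀ : ℕ, ∀ n ≥ n₀, ∀ M k : ℕ,
      δ ≤ (M : ℝ) / Nr n → (M : ℝ) / Nr n ≤ 1 - δ →
      δ ≤ (k : ℝ) / n → (k : ℝ) / n ≤ 1 - δ →
      PrGnM n M (fun G => ∀ z₀ z₁ : ℝ, z₀ ≤ z₁ →
          |Pru (kSets n k) (fun S => (edgesIn G S : ℝ) ∈ Set.Icc z₀ z₁) -
            gaussMeas (muP n M k) (lamP n M k * (n:ℝ) ^ 2) (Set.Icc z₀ z₁)|
          ≤ (n:ℝ) ^ (-(1/4 : ℝ) + ε))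
        ≥ 1 - Real.exp (-(n:ℝ) ^ η) := by
  classical
  obtain ⟨h, h1, h2, A, hA, H, hs0, hs1⟩ := exists_step
  set C1 : ℝ := (√(δ ^ 5))⁻¹ with hC1
  have hC1p : 0 < C1 := by positivity
  set C : ℝ := 2 + 2 * (A * (1 + m3) + 2 * A + C1) + C1 with hC
  have htend : ∀ a : ℝ, 0 < a → Filter.Tendsto (fun n : ℕ => (n:ℝ) ^ a) Filter.atTop Filter.atTop :=
    fun a ha => (tendsto_rpow_atTop ha).comp tendsto_natCast_atTop_atTop
  have hev : ∀ᶠ n : ℕ in Filter.atTop, 2 ≤ n ∧ 1 ≤ (n:ℝ) ^ (ε / 4) ∧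
      6 * A * (5 + 16 / ε) ≤ (n:ℝ) ^ (ε / 4) ∧ C ≤ (n:ℝ) ^ (ε / 4) := by
    have ht := htend (ε / 4) (by positivity)
    exact (Filter.eventually_ge_atTop 2).and ((ht.eventually_ge_atTop _).and
      ((ht.eventually_ge_atTop _).and (ht.eventually_ge_atTop _)))
  obtain ⟨n₀, hn₀⟩ := Filter.eventually_atTop.1 hev
  refine ⟨ε / 4, by positivity, n₀, fun n hnn M k hM1 hM2 hk1 hk2 => ?_⟩
  obtain ⟨hn, hy1, hy2, hyC⟩ := hn₀ n hnn
  have hn' : (2:ℝ) ≤ n := by exact_mod_cast hn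
  have hn0 : (0:ℝ) < n := by linarith
  have hN := Nr_pos hn
  have hkn : k ≤ n := by
    have : (k:ℝ) ≤ n := by
      rw [div_le_iff₀ hn0] at hk2; nlinarith
    exact_mod_cast this
  have hMN : M ≤ n.choose 2 := by
    have : (M:ℝ) ≤ (n.choose 2 : ℕ) := by
      rw [cast_choose_two]
      rw [div_le_iff₀ hN] at hM2; nlinarith
    exact_mod_cast this
  -- With `q = n ^ (1/4)` and `y = n ^ (ε/4)` all powers of `n` become monomials:
  -- `L = q ^ 3`, `σ = 3 A / q`, `t = y ^ 2 / q` and `n ^ (-1/4 + ε) = y ^ 4 / q`.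
  set q : ℝ := (n:ℝ) ^ (1/4 : ℝ) with hq
  set y : ℝ := (n:ℝ) ^ (ε / 4) with hy
  have hq1 : 1 ≤ q := Real.one_le_rpow (by linarith) (by norm_num)
  have hq0 : 0 < q := by linarith
  have hqn : (n:ℝ) = q ^ 4 := by
    rw [hq, ← Real.rpow_natCast, ← Real.rpow_mul hn0.le]; norm_num
  have herr : (n:ℝ) ^ (-(1/4 : ℝ) + ε) = y ^ 4 / q := by
    rw [Real.rpow_add hn0, Real.rpow_neg hn0.le, ← hq, hy, ← Real.rpow_natCast,
      ← Real.rpow_mul hn0.le, div_eq_inv_mul]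
    congr 2; push_cast; ring
  have hlam := lamP_lower hn hδ hM1 hM2 hk1 hk2
  have hδ5 : 0 < δ ^ 5 := by positivity
  have hv : 0 < lamP n M k * (n:ℝ) ^ 2 := mul_pos (by linarith) (by positivity)
  have hρ : (√(2 * Real.pi * (lamP n M k * (n:ℝ) ^ 2)))⁻¹ ≤ C1 / q ^ 4 := by
    have e : C1 / q ^ 4 = (√(δ ^ 5 * (n:ℝ) ^ 2))⁻¹ := by
      rw [Real.sqrt_mul hδ5.le, Real.sqrt_sq hn0.le, hC1, ← hqn, mul_inv, div_eq_mul_inv]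
    rw [e]
    have hpi := Real.pi_gt_three
    have : δ ^ 5 ≤ 2 * Real.pi * lamP n M k := by nlinarith
    rw [← mul_assoc]
    gcongr
  have hm3 := m3_nonneg
  have hσ2 : 8 * n * (A / q ^ 3) ^ 2 + (n:ℝ) ^ 2 * (A / (q ^ 3) ^ 2) ^ 2 ≤ (3 * A / q) ^ 2 := by
    have e : 8 * n * (A / q ^ 3) ^ 2 + (n:ℝ) ^ 2 * (A / (q ^ 3) ^ 2) ^ 2
        = (A / q) ^ 2 * (8 + 1 / q ^ 2) := by rw [hqn]; field_simp
    have e' : (3 * A / q) ^ 2 = (A / q) ^ 2 * 9 := by ring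
    rw [e, e']
    have : 1 / q ^ 2 ≤ 1 := by
      rw [div_le_one (by positivity)]; exact one_le_pow₀ hq1
    exact mul_le_mul_of_nonneg_left (by linarith) (by positivity)
  have hfinal : 2 * (y ^ 2 / q + ((n:ℝ) ^ 2 * (A / (q ^ 3) ^ 3 * (1 + m3))
      + A / (q ^ 3) ^ 2 * (2 * n)) + q ^ 3 * (C1 / q ^ 4)) + C1 / q ^ 4
      ≤ (n:ℝ) ^ (-(1/4 : ℝ) + ε) := by
    rw [herr]
    have e : 2 * (y ^ 2 / q + ((n:ℝ) ^ 2 * (A / (q ^ 3) ^ 3 * (1 + m3))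
        + A / (q ^ 3) ^ 2 * (2 * n)) + q ^ 3 * (C1 / q ^ 4)) + C1 / q ^ 4
        = (2 * (y ^ 2 + A * (1 + m3) + 2 * A * (1 / q) + C1) + C1 * (1 / q ^ 3)) / q := by
      rw [hqn]; field_simp; ring
    rw [e]
    refine div_le_div_of_nonneg_right ?_ hq0.le
    have f1 : 2 * A * (1 / q) ≤ 2 * A :=
      mul_le_of_le_one_right (by positivity) ((div_le_one hq0).2 hq1)
    have f2 : C1 * (1 / q ^ 3) ≤ C1 :=
      mul_le_of_le_one_right hC1p.le ((div_le_one (by positivity)).2 (one_le_pow₀ hq1))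
    have f3 : 1 ≤ y ^ 2 := one_le_pow₀ hy1
    have f4 : 0 ≤ 2 * (A * (1 + m3) + 2 * A + C1) + C1 := by positivity
    calc 2 * (y ^ 2 + A * (1 + m3) + 2 * A * (1 / q) + C1) + C1 * (1 / q ^ 3)
        ≤ 2 * y ^ 2 + (2 * (A * (1 + m3) + 2 * A + C1) + C1) := by linarith
      _ ≤ C * y ^ 2 := by rw [hC]; linarith [mul_le_mul_of_nonneg_left f3 f4]
      _ ≤ y ^ 2 * y ^ 2 :=
          mul_le_mul_of_nonneg_right (hyC.trans (le_self_pow₀ hy1 two_ne_zero)) (by positivity)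
      _ = y ^ 4 := by ring
  have hmain := prob_lower (t := y ^ 2 / q) hn hkn hMN rfl (hδ.le.trans hM1) (by linarith) hA H
    hs0 hs1 (pow_pos hq0 3) (σ := 3 * A / q) (by positivity) hσ2 hv hρ hfinal
  have hts : y ^ 2 / q / (2 * (3 * A / q)) = y ^ 2 / (6 * A) := by field_simp; norm_num
  rw [hts] at hmain
  have htail := tail_bound hn hε hA hy hy1 hy2
  exact le_trans (by linarith) hmain
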